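/- Let A and B be polynomial rings over a field k in disjoint sets of variables, R = A ⊗_k B, and let I ⊆ A and J ⊆ B be nonzero proper homogeneous ideals. Then for all n ≥ 1: depth (I+J)^{(n)}/(I+J)^{(n+1)} = min_{i+j=n} { depth I^{(i)}/I^{(i+1)} + depth J^{(j)}/J^{(j+1)} }, where the depths of the quotient modules are taken over R, A and B respectively. -/

import Mathlib

/-!
Write `R = k[X, Y]` for `A = k[X]` and `B = k[Y]`. The tensor product over `k` of an `A`-module `M`
and a `B`-module `N` is an `R`-module, and the formula combines three facts.

* Binomial expansion (`sumFil_symbPow`): `(I + J)^(n) = ∑_{i + j = n} I^(i) J^(j)`. The point is that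
  an element of `(I^(i) / I^(i+1)) ⊗ (J^(j) / J^(j+1))` which vanishes locally at the minimal primes
  of `I + J` is zero (`eq_zero_of_locally_eq_zero`), i.e. that all associated primes of this module
  are minimal over `I + J`. An associated prime `𝔭` contracts to minimal primes `P` of `I` and `Q`
  of `J`. Let `k[U] → A / P` and `k[V] → B / Q` be Noether normalizations. Modulo the elements killed
  by something outside of `P` (of `Q`), both factors are torsion-free over `k[U]` and `k[V]`, and the
  tensor product of torsion-free modules is torsion-free over `k[U, V]` (`tensor_smul_eq_zero`, by
  embedding into direct sums of polynomial rings), whence `𝔭 ∩ k[U, V] = 0`. As `k[U, V] → R / 𝔮` is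
  integral for every prime `I + J ⊆ 𝔮 ⊆ 𝔭`, incomparability gives `𝔮 = 𝔭`.

* Graded pieces of a sum of filtrations (`nonempty_sumFil_equiv`): over a field,
  `K n / K (n + 1) ≃ ⨁_{i + j = n} (F i / F (i + 1)) ⊗ (G j / G (j + 1))` for
  `K n = ∑_{i + j = n} F i · G j` with `F`, `G` decreasing.

* Depth: it is additive under `M ⊗ N` (`HasDepth.tensor`), and the depth of a finite direct sum is the
  minimum of the depths (`HasDepth.pi`). Depth is handled through maximal regular sequences
  (`HasDepth`); all of these have the same length by `HasDepth.quot`.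

The graded pieces `I^(i) / I^(i+1)` are not equal to `m` times themselves because `I` is nonzero and
contained in `m` (`smul_grPiece_ne_top`), so that maximal regular sequences exist for them.
-/

open MvPolynomial TensorProduct

/-- The `n`-th symbolic power of an ideal `Q`:
`Q^{(n)} = ⋂_{P ∈ Min(Q)} (Q^n R_P ∩ R)`, the intersection over the minimal primes `P` of `Q`
of the contractions of `Q^n R_P` along the localization maps `R → R_P`. -/
noncomputable def symbPow {R : Type*} [CommRing R] (Q : Ideal R) (n : ℕ) : Ideal R :=
  ⨅ (P : Ideal R) (hP : P ∈ Q.minimalPrimes),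
    letI : P.IsPrime := hP.1.1
    Ideal.comap (algebraMap R (Localization.AtPrime P))
      (Ideal.map (algebraMap R (Localization.AtPrime P)) (Q ^ n))

/-- The depth of a module `M` with respect to an ideal `m`: the maximal length of an
`M`-regular sequence contained in `m`. -/
noncomputable def idealDepth {R : Type*} [CommRing R] (m : Ideal R)
    (M : Type*) [AddCommGroup M] [Module R M] : ℕ :=
  sSup {n | ∃ rs : List R, rs.length = n ∧ (∀ r ∈ rs, r ∈ m) ∧
    RingTheory.Sequence.IsRegular M rs}

/-- The maximal homogeneous ideal of a polynomial ring, generated by the variables. -/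
noncomputable def maxHomIdeal (k : Type*) [CommSemiring k] (σ : Type*) :
    Ideal (MvPolynomial σ k) :=
  Ideal.span (Set.range X)

/-- An ideal of a polynomial ring is homogeneous if it contains all homogeneous components of
each of its elements. -/
def IsHomogeneousIdeal {k σ : Type*} [CommSemiring k] (I : Ideal (MvPolynomial σ k)) : Prop :=
  ∀ f ∈ I, ∀ d : ℕ, homogeneousComponent d f ∈ I

/-- A monomial ideal: an ideal generated by monomials. -/
def IsMonomialIdeal {k σ : Type*} [CommSemiring k] (I : Ideal (MvPolynomial σ k)) : Prop :=
  ∃ S : Set (σ →₀ ℕ), I = Ideal.span ((fun s => monomial s (1 : k)) '' S)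

/-! ### Depth via maximal regular sequences -/

/-- `HasDepth m n M`: there is an `M`-regular sequence of length `n` in `m` such that a nonzero
element of the successive quotient is killed by `m`, i.e. a *maximal* regular sequence of
length `n`. -/
def HasDepth {R : Type} [CommRing R] (m : Ideal R) :
    ℕ → ∀ (M : Type) [AddCommGroup M] [Module R M], Prop
  | 0, M, _, _ => ∃ z : M, z ≠ 0 ∧ ∀ r ∈ m, r • z = 0
  | n + 1, M, _, _ => ∃ x ∈ m, IsSMulRegular M x ∧ HasDepth m n (QuotSMulTop x M)

section Depth

open scoped Pointwise

variable {R : Type} [CommRing R] {m : Ideal R}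

lemma HasDepth.congr {n : ℕ} : ∀ {M M' : Type} [AddCommGroup M] [Module R M] [AddCommGroup M']
    [Module R M'] (_ : M ≃ₗ[R] M'), HasDepth m n M → HasDepth m n M' := by
  induction n with
  | zero =>
    rintro M M' _ _ _ _ e ⟨z, hz, h⟩
    exact ⟨e z, by simpa using hz, fun r hr => by rw [← map_smul, h r hr, map_zero]⟩
  | succ n ih =>
    rintro M M' _ _ _ _ e ⟨x, hx, hreg, h⟩
    exact ⟨x, hx, (e.isSMulRegular_congr x).1 hreg, ih (QuotSMulTop.congr x e) h⟩

lemma mem_smul_top_iff {M : Type*} [AddCommGroup M] [Module R M] (x : R) (z : M) :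
    z ∈ x • (⊤ : Submodule R M) ↔ ∃ w, x • w = z := by
  rw [Submodule.mem_smul_pointwise_iff_exists]
  simp

/-- `M / x M` is the target of any surjection from `M` with kernel `x M`. -/
noncomputable def quotSMulTopEquiv {M N : Type*} [AddCommGroup M] [Module R M] [AddCommGroup N]
    [Module R N] (x : R) (f : M →ₗ[R] N) (hf : Function.Surjective f)
    (hk : ∀ z, f z = 0 ↔ ∃ w, x • w = z) : QuotSMulTop x M ≃ₗ[R] N :=
  (Submodule.quotEquivOfEq _ _ (by
    ext z; rw [mem_smul_top_iff, LinearMap.mem_ker, hk])).trans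
    (f.quotKerEquivOfSurjective hf)

/-- Prime avoidance: if no nonzero element of `M` is killed by `m`, then `m` contains an
`M`-regular element. -/
lemma exists_regular_of_not_hasDepth_zero [IsNoetherianRing R] {M : Type} [AddCommGroup M]
    [Module R M] [Module.Finite R M] (h : ¬ HasDepth m 0 M) : ∃ x ∈ m, IsSMulRegular M x := by
  by_contra! hc
  rcases subsingleton_or_nontrivial M with hM | hM
  · exact hc 0 m.zero_mem IsSMulRegular.zero
  obtain ⟨a, ha⟩ := associatedPrimes.nonempty R M
  obtain ⟨p, hp, hmp⟩ :=
    (Ideal.subset_union_prime_finite (f := id) (I := m) (associatedPrimes.finite R M) a a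
      (fun _ hi _ _ => IsAssociatedPrime.isPrime hi)).1 (by
        simp only [id]
        rw [biUnion_associatedPrimes_eq_compl_regular R M]
        exact fun r hr => hc r hr)
  obtain ⟨hpp, z, hz⟩ := isAssociatedPrime_iff.1 hp
  refine h ⟨z, ?_, fun r hr => ?_⟩
  · rintro rfl
    exact hpp.ne_top (by rw [hz]; ext; simp [Submodule.mem_colon_singleton])
  · have : r ∈ p := hmp hr
    rw [hz, Submodule.mem_colon_singleton] at this
    simpa using this

/-- The socles of `M / x M` and `M / y M` are isomorphic for regular elements `x`, `y` of `m`; here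
only the fact that they vanish simultaneously is recorded. -/
lemma hasDepth_zero_swap {M : Type} [AddCommGroup M] [Module R M] {x y : R} (hx : x ∈ m)
    (hxr : IsSMulRegular M x) (hyr : IsSMulRegular M y)
    (h : HasDepth m 0 (QuotSMulTop y M)) : HasDepth m 0 (QuotSMulTop x M) := by
  obtain ⟨z, hz, hm⟩ := h
  obtain ⟨w, rfl⟩ := Submodule.Quotient.mk_surjective _ z
  have key : ∀ r ∈ m, ∃ v, y • v = r • w := fun r hr => by
    have := hm r hr
    rw [← Submodule.Quotient.mk_smul, Submodule.Quotient.mk_eq_zero, mem_smul_top_iff] at this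
    exact this
  obtain ⟨u, hu⟩ := key x hx
  refine ⟨Submodule.Quotient.mk u, ?_, fun r hr => ?_⟩
  · rw [Ne, Submodule.Quotient.mk_eq_zero, mem_smul_top_iff]
    rintro ⟨v, rfl⟩
    apply hz
    rw [Submodule.Quotient.mk_eq_zero, mem_smul_top_iff]
    refine ⟨v, hxr ?_⟩
    simp only
    rw [← hu, smul_comm]
  · obtain ⟨v, hv⟩ := key r hr
    rw [← Submodule.Quotient.mk_smul, Submodule.Quotient.mk_eq_zero, mem_smul_top_iff]
    refine ⟨v, hyr ?_⟩
    simp only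
    rw [smul_comm y x v, hv, smul_comm x r w, ← hu, smul_comm]

/-- If `x` is regular on `M` and `z` on `M / x M`, then `x` is regular on `M / z M`. -/
lemma isSMulRegular_swap {M : Type*} [AddCommGroup M] [Module R M] {x z : R}
    (hx : IsSMulRegular M x) (hz : IsSMulRegular (QuotSMulTop x M) z) :
    IsSMulRegular (QuotSMulTop z M) x := by
  rw [isSMulRegular_quotient_iff_mem_of_smul_mem] at hz ⊢
  intro v hv
  obtain ⟨w, hw⟩ := (mem_smul_top_iff z _).1 hv
  obtain ⟨u, rfl⟩ := (mem_smul_top_iff x _).1 (hz w ((mem_smul_top_iff x _).2 ⟨v, hw.symm⟩))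
  refine (mem_smul_top_iff z _).2 ⟨u, hx ?_⟩
  simp only
  rw [← hw, smul_comm]

/-- `(M / x M) / y (M / x M)` does not depend on the order of `x` and `y`. -/
noncomputable def quotSMulTopComm {M : Type*} [AddCommGroup M] [Module R M] (x y : R) :
    QuotSMulTop y (QuotSMulTop x M) ≃ₗ[R] QuotSMulTop x (QuotSMulTop y M) := by
  refine quotSMulTopEquiv y
    (QuotSMulTop.map x (Submodule.mkQ (y • (⊤ : Submodule R M))))
    (QuotSMulTop.map_surjective x (Submodule.mkQ_surjective _)) ?_
  intro z
  obtain ⟨w, rfl⟩ := Submodule.Quotient.mk_surjective _ z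
  rw [QuotSMulTop.map_apply_mk, Submodule.mkQ_apply, Submodule.Quotient.mk_eq_zero,
    mem_smul_top_iff]
  constructor
  · rintro ⟨u, hu⟩
    obtain ⟨u, rfl⟩ := Submodule.Quotient.mk_surjective _ u
    rw [← Submodule.Quotient.mk_smul, Submodule.Quotient.eq, mem_smul_top_iff] at hu
    obtain ⟨v, hv⟩ := hu
    refine ⟨Submodule.Quotient.mk (-v), ?_⟩
    rw [← Submodule.Quotient.mk_smul, Submodule.Quotient.eq, mem_smul_top_iff]
    exact ⟨-u, by rw [smul_neg, smul_neg, hv]; abel⟩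
  · rintro ⟨u, hu⟩
    obtain ⟨u, rfl⟩ := Submodule.Quotient.mk_surjective _ u
    rw [← Submodule.Quotient.mk_smul, Submodule.Quotient.eq, mem_smul_top_iff] at hu
    obtain ⟨v, hv⟩ := hu
    refine ⟨Submodule.Quotient.mk (-v), ?_⟩
    rw [← Submodule.Quotient.mk_smul, Submodule.Quotient.eq, mem_smul_top_iff]
    exact ⟨-u, by rw [smul_neg, smul_neg, hv]; abel⟩

lemma not_hasDepth_zero_of_regular {M : Type} [AddCommGroup M] [Module R M] {x : R} (hx : x ∈ m)
    (hxr : IsSMulRegular M x) : ¬ HasDepth m 0 M := by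
  rintro ⟨z, hz, h⟩
  exact hz (hxr.right_eq_zero_of_smul (h x hx))

/-- All maximal regular sequences have the same length, in one-step form: dividing by *any* regular
element of `m` lowers the depth by one. -/
lemma HasDepth.quot [IsNoetherianRing R] {n : ℕ} : ∀ {M : Type} [AddCommGroup M] [Module R M]
    [Module.Finite R M] {x : R} (_ : x ∈ m) (_ : IsSMulRegular M x) (_ : HasDepth m n M),
    ∃ n', n = n' + 1 ∧ HasDepth m n' (QuotSMulTop x M) := by
  induction n with
  | zero =>
    intro M _ _ _ x hx hxr h
    exact (not_hasDepth_zero_of_regular hx hxr h).elim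
  | succ n ih =>
    rintro M _ _ _ x hx hxr ⟨y, hy, hyr, h⟩
    refine ⟨n, rfl, ?_⟩
    cases n with
    | zero => exact hasDepth_zero_swap hx hxr hyr h
    | succ n =>
      have h0y : ¬ HasDepth m 0 (QuotSMulTop y M) := by
        obtain ⟨y', hy', hyr', -⟩ := h
        exact not_hasDepth_zero_of_regular hy' hyr'
      have h0x : ¬ HasDepth m 0 (QuotSMulTop x M) := fun hc =>
        h0y (hasDepth_zero_swap hy hyr hxr hc)
      -- a single element regular on `M`, `M / x M` and `M / y M`
      obtain ⟨z, hz, hzr⟩ : ∃ z ∈ m, IsSMulRegular (M × QuotSMulTop x M × QuotSMulTop y M) z := by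
        apply exists_regular_of_not_hasDepth_zero
        rintro ⟨⟨a, b, c⟩, habc, hk⟩
        apply habc
        have ha : a = 0 := by
          by_contra hne
          exact not_hasDepth_zero_of_regular hx hxr ⟨a, hne, fun r hr => congrArg (·.1) (hk r hr)⟩
        have hb : b = 0 := by
          by_contra hne
          exact h0x ⟨b, hne, fun r hr => congrArg (·.2.1) (hk r hr)⟩
        have hc : c = 0 := by
          by_contra hne
          exact h0y ⟨c, hne, fun r hr => congrArg (·.2.2) (hk r hr)⟩
        rw [ha, hb, hc]; rfl
      have hzM : IsSMulRegular M z := fun a b hab => by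
        have := @hzr (a, 0, 0) (b, 0, 0) (by simpa using hab)
        simpa using this
      have hzx : IsSMulRegular (QuotSMulTop x M) z := fun a b hab => by
        have := @hzr (0, a, 0) (0, b, 0) (by simpa using hab)
        simpa using this
      have hzy : IsSMulRegular (QuotSMulTop y M) z := fun a b hab => by
        have := @hzr (0, 0, a) (0, 0, b) (by simpa using hab)
        simpa using this
      obtain ⟨n1, hn1, h1⟩ := ih hz hzy h
      obtain rfl : n = n1 := by omega
      have h2 : HasDepth m (n + 1) (QuotSMulTop z M) :=
        ⟨y, hy, isSMulRegular_swap hyr hzy, h1.congr (quotSMulTopComm y z)⟩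
      obtain ⟨n2, hn2, h3⟩ := ih hx (isSMulRegular_swap hxr hzx) h2
      obtain rfl : n = n2 := by omega
      exact ⟨z, hz, hzx, h3.congr (quotSMulTopComm z x)⟩

lemma HasDepth.exists_isRegular {n : ℕ} : ∀ {M : Type} [AddCommGroup M] [Module R M],
    HasDepth m n M → ∃ rs : List R, rs.length = n ∧ (∀ r ∈ rs, r ∈ m) ∧
      RingTheory.Sequence.IsRegular M rs := by
  induction n with
  | zero =>
    rintro M _ _ ⟨z, hz, -⟩
    have : Nontrivial M := ⟨z, 0, hz⟩
    exact ⟨[], rfl, by simp, RingTheory.Sequence.IsRegular.nil R M⟩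
  | succ n ih =>
    rintro M _ _ ⟨x, hx, hxr, h⟩
    obtain ⟨rs, hl, hm, hr⟩ := ih h
    refine ⟨x :: rs, by simp [hl], ?_, hr.cons hxr⟩
    simp only [List.mem_cons]
    rintro r (rfl | hr)
    exacts [hx, hm r hr]

lemma HasDepth.length_le [IsNoetherianRing R] (rs : List R) : ∀ {n : ℕ} {M : Type} [AddCommGroup M]
    [Module R M] [Module.Finite R M], HasDepth m n M → (∀ r ∈ rs, r ∈ m) →
      RingTheory.Sequence.IsWeaklyRegular M rs → rs.length ≤ n := by
  induction rs with
  | nil => intros; simp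
  | cons x rs ih =>
    intro n M _ _ _ h hm hr
    rw [RingTheory.Sequence.isWeaklyRegular_cons_iff] at hr
    obtain ⟨n', rfl, h'⟩ := h.quot (hm x (by simp)) hr.1
    have := ih h' (fun r hr => hm r (by simp [hr])) hr.2
    simpa using this

theorem HasDepth.idealDepth_eq [IsNoetherianRing R] {n : ℕ} {M : Type} [AddCommGroup M]
    [Module R M] [Module.Finite R M] (h : HasDepth m n M) : idealDepth m M = n := by
  have : IsGreatest {n | ∃ rs : List R, rs.length = n ∧ (∀ r ∈ rs, r ∈ m) ∧
    RingTheory.Sequence.IsRegular M rs} n := by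
    refine ⟨h.exists_isRegular, ?_⟩
    rintro _ ⟨rs, rfl, hm, hr⟩
    exact h.length_le rs hm hr.toIsWeaklyRegular
  exact this.csSup_eq

/-- Maximal regular sequences exist as soon as `m M ≠ M`: a regular element `x` on `M ≠ 0` strictly
enlarges the annihilator, so that Noetherian induction on annihilators applies. -/
theorem exists_hasDepth [IsNoetherianRing R] (M : Type) [AddCommGroup M] [Module R M]
    [Module.Finite R M] (h : m • (⊤ : Submodule R M) ≠ ⊤) : ∃ n, HasDepth m n M := by
  suffices H : ∀ (I : Ideal R) (M : Type) [AddCommGroup M] [Module R M] [Module.Finite R M],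
      I = Module.annihilator R M → m • (⊤ : Submodule R M) ≠ ⊤ → ∃ n, HasDepth m n M from
    H _ M rfl h
  intro I
  induction I using WellFoundedGT.induction with
  | ind I ih =>
  intro M _ _ _ hI hM
  by_cases h0 : HasDepth m 0 M
  · exact ⟨0, h0⟩
  obtain ⟨x, hx, hxr⟩ := exists_regular_of_not_hasDepth_zero h0
  have hne : ∃ z : M, z ≠ 0 := by
    by_contra! hc
    exact hM (by ext z; simp [hc z])
  have hlt : I < Module.annihilator R (QuotSMulTop x M) := by
    rw [hI]
    refine lt_of_le_of_ne
      ((Submodule.mkQ (x • (⊤ : Submodule R M))).annihilator_le_of_surjective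
        (Submodule.mkQ_surjective _)) fun heq => ?_
    have hxa : x ∈ Module.annihilator R M := heq ▸ QuotSMulTop.mem_annihilator M x
    obtain ⟨z, hz⟩ := hne
    exact hz (hxr.right_eq_zero_of_smul (Module.mem_annihilator.1 hxa z))
  obtain ⟨n, hn⟩ := ih _ hlt (QuotSMulTop x M) rfl (fun hc => hM (by
    rw [eq_top_iff]
    intro z _
    have hz : (Submodule.Quotient.mk z : QuotSMulTop x M) ∈
        m • (⊤ : Submodule R (QuotSMulTop x M)) := by
      rw [hc]; exact Submodule.mem_top
    have : m • (⊤ : Submodule R (QuotSMulTop x M)) =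
        (m • (⊤ : Submodule R M)).map (Submodule.mkQ _) := by
      rw [Submodule.map_smul'', Submodule.map_top, Submodule.range_mkQ]
    rw [this] at hz
    obtain ⟨w, hw, hwz⟩ := hz
    rw [Submodule.mkQ_apply, Submodule.Quotient.eq, mem_smul_top_iff] at hwz
    obtain ⟨v, hv⟩ := hwz
    have : z = w - x • v := by rw [hv]; abel
    rw [this]
    exact Submodule.sub_mem _ hw (Submodule.smul_mem_smul hx Submodule.mem_top)))
  exact ⟨n + 1, x, hx, hxr, hn⟩

/-- The depth of a finite direct sum is the minimum of the depths. -/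
theorem HasDepth.pi [IsNoetherianRing R] {ι : Type} [Finite ι] {n : ℕ} : ∀ {P : ι → Type}
    [∀ i, AddCommGroup (P i)] [∀ i, Module R (P i)] [∀ i, Module.Finite R (P i)] {d : ι → ℕ},
    (∀ i, HasDepth m (d i) (P i)) → (∃ i, d i = n) → (∀ i, n ≤ d i) →
      HasDepth m n (∀ i, P i) := by
  classical
  induction n with
  | zero =>
    rintro P _ _ _ d h ⟨i, hi⟩ -
    obtain ⟨z, hz, hk⟩ := hi ▸ h i
    refine ⟨Pi.single i z, by simpa using hz, fun r hr => ?_⟩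
    rw [← Pi.single_smul, hk r hr, Pi.single_zero]
  | succ n ih =>
    rintro P _ _ _ d h ⟨i, hi⟩ hle
    obtain ⟨x, hx, hxr⟩ : ∃ x ∈ m, IsSMulRegular (∀ i, P i) x := by
      apply exists_regular_of_not_hasDepth_zero
      rintro ⟨z, hz, hk⟩
      apply hz
      funext j
      by_contra hne
      obtain ⟨e, he⟩ : ∃ e, d j = e + 1 := ⟨d j - 1, by have := hle j; omega⟩
      obtain ⟨y, hy, hyr, -⟩ := he ▸ h j
      exact not_hasDepth_zero_of_regular hy hyr ⟨z j, hne, fun r hr => congrFun (hk r hr) j⟩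
    have hxr' : ∀ j, IsSMulRegular (P j) x := fun j a b hab => by
      have := @hxr (Pi.single j a) (Pi.single j b) (by
        simp only [← Pi.single_smul] at hab ⊢; rw [hab])
      exact Pi.single_injective j this
    have hq := fun j => (h j).quot hx (hxr' j)
    choose e he hq using hq
    refine ⟨x, hx, hxr, ?_⟩
    have := ih (P := fun j => QuotSMulTop x (P j)) hq ⟨i, by have := he i; omega⟩
      (fun j => by have := he j; have := hle j; omega)
    refine this.congr (quotSMulTopEquiv x
      (LinearMap.pi fun j => (Submodule.mkQ (x • (⊤ : Submodule R (P j)))).comp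
        (LinearMap.proj j)) ?_ ?_).symm
    · intro w
      choose v hv using fun j => Submodule.mkQ_surjective _ (w j)
      exact ⟨v, funext hv⟩
    · intro z
      constructor
      · intro hz
        have : ∀ j, ∃ w, x • w = z j := fun j => by
          have := congrFun hz j
          simpa only [LinearMap.pi_apply, LinearMap.comp_apply, LinearMap.proj_apply,
            Submodule.mkQ_apply, Pi.zero_apply, Submodule.Quotient.mk_eq_zero,
            mem_smul_top_iff] using this
        choose w hw using this
        exact ⟨w, funext hw⟩
      · rintro ⟨w, rfl⟩
        funext j
        simp only [LinearMap.pi_apply, LinearMap.comp_apply, LinearMap.proj_apply,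
            Submodule.mkQ_apply, Pi.zero_apply, Submodule.Quotient.mk_eq_zero,
            mem_smul_top_iff]
        exact ⟨w j, rfl⟩

end Depth

/-! ### External tensor products -/

section External

open scoped Pointwise

variable {k : Type} [Field k] {σ τ : Type}

/-- The isomorphism `k[X] ⊗ k[Y] ≃ k[X, Y]`. -/
noncomputable def sumEquiv (k : Type) [Field k] (σ τ : Type) :
    MvPolynomial σ k ⊗[k] MvPolynomial τ k ≃ₐ[k] MvPolynomial (σ ⊕ τ) k :=
  tensorEquivSum k σ τ k

lemma sumEquiv_tmul (a : MvPolynomial σ k) (b : MvPolynomial τ k) :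
    sumEquiv k σ τ (a ⊗ₜ b) = rename Sum.inl a * rename Sum.inr b := by
  have h : (sumEquiv k σ τ).toAlgHom =
      Algebra.TensorProduct.productMap (rename Sum.inl) (rename Sum.inr) := by
    apply Algebra.TensorProduct.ext
    · apply MvPolynomial.algHom_ext
      intro i
      simp [sumEquiv]
    · apply MvPolynomial.algHom_ext
      intro i
      simp [sumEquiv]
  exact (DFunLike.congr_fun h (a ⊗ₜ b)).trans (by simp)

variable {M M' N N' : Type}
  [AddCommGroup M] [Module (MvPolynomial σ k) M] [Module k M] [IsScalarTower k (MvPolynomial σ k) M]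
  [AddCommGroup N] [Module (MvPolynomial τ k) N] [Module k N] [IsScalarTower k (MvPolynomial τ k) N]
  [AddCommGroup M'] [Module (MvPolynomial σ k) M'] [Module k M']
  [IsScalarTower k (MvPolynomial σ k) M']
  [AddCommGroup N'] [Module (MvPolynomial τ k) N'] [Module k N']
  [IsScalarTower k (MvPolynomial τ k) N']

/-- The action of `k[X, Y]` on `M ⊗ N`, for a `k[X]`-module `M` and a `k[Y]`-module `N`. -/
noncomputable def extAction (k : Type) [Field k] (σ τ : Type) (M N : Type)
    [AddCommGroup M] [Module (MvPolynomial σ k) M] [Module k M]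
    [IsScalarTower k (MvPolynomial σ k) M]
    [AddCommGroup N] [Module (MvPolynomial τ k) N] [Module k N]
    [IsScalarTower k (MvPolynomial τ k) N] :
    MvPolynomial (σ ⊕ τ) k →ₐ[k] Module.End k (M ⊗[k] N) :=
  ((Module.endTensorEndAlgHom (R := k) (S := k) (A := k) (M := M) (N := N)).comp
    (Algebra.TensorProduct.map (Algebra.lsmul k k M) (Algebra.lsmul k k N))).comp
      (sumEquiv k σ τ).symm.toAlgHom

/-- The external tensor product of a `k[X]`-module and a `k[Y]`-module, as a `k[X, Y]`-module. -/
noncomputable instance extModule : Module (MvPolynomial (σ ⊕ τ) k) (M ⊗[k] N) :=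
  Module.compHom _ (extAction k σ τ M N).toRingHom

lemma ext_smul_def (r : MvPolynomial (σ ⊕ τ) k) (t : M ⊗[k] N) :
    r • t = extAction k σ τ M N r t := rfl

lemma mul_smul_tmul (a : MvPolynomial σ k) (b : MvPolynomial τ k) (x : M) (y : N) :
    (rename Sum.inl a * rename Sum.inr b : MvPolynomial (σ ⊕ τ) k) • (x ⊗ₜ[k] y) =
      (a • x) ⊗ₜ (b • y) := by
  rw [ext_smul_def, extAction, ← sumEquiv_tmul]
  simp
  rfl

lemma inl_smul_tmul (a : MvPolynomial σ k) (x : M) (y : N) :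
    (rename Sum.inl a : MvPolynomial (σ ⊕ τ) k) • (x ⊗ₜ[k] y) = (a • x) ⊗ₜ y := by
  simpa using mul_smul_tmul a (1 : MvPolynomial τ k) x y

lemma inr_smul_tmul (b : MvPolynomial τ k) (x : M) (y : N) :
    (rename Sum.inr b : MvPolynomial (σ ⊕ τ) k) • (x ⊗ₜ[k] y) = x ⊗ₜ (b • y) := by
  simpa using mul_smul_tmul (1 : MvPolynomial σ k) b x y

instance extTower : IsScalarTower k (MvPolynomial (σ ⊕ τ) k) (M ⊗[k] N) :=
  ⟨fun c r t => by rw [ext_smul_def, ext_smul_def, map_smul, LinearMap.smul_apply]⟩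

/-- Every polynomial in `k[X, Y]` is a sum of products of a polynomial in `X` and one in `Y`. -/
lemma sum_induction {p : MvPolynomial (σ ⊕ τ) k → Prop} (r : MvPolynomial (σ ⊕ τ) k)
    (h0 : p 0) (hadd : ∀ r s, p r → p s → p (r + s))
    (hmul : ∀ a b, p (rename Sum.inl a * rename Sum.inr b)) : p r := by
  obtain ⟨t, rfl⟩ := (sumEquiv k σ τ).surjective r
  induction t with
  | zero => simpa using h0
  | tmul a b => rw [sumEquiv_tmul]; exact hmul a b
  | add s t hs ht => rw [map_add]; exact hadd _ _ hs ht

/-- An additive map between external tensor products that is compatible with pure actions on pure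
tensors is `k[X, Y]`-linear. -/
noncomputable def extLinear {P : Type*} [AddCommGroup P] [Module (MvPolynomial (σ ⊕ τ) k) P]
    (f : M ⊗[k] N →+ P)
    (h : ∀ (a : MvPolynomial σ k) (b : MvPolynomial τ k) (x : M) (y : N),
      f ((a • x) ⊗ₜ (b • y)) =
        (rename Sum.inl a * rename Sum.inr b : MvPolynomial (σ ⊕ τ) k) • f (x ⊗ₜ y)) :
    M ⊗[k] N →ₗ[MvPolynomial (σ ⊕ τ) k] P where
  toFun := f
  map_add' := f.map_add
  map_smul' r t := by
    simp only [RingHom.id_apply]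
    induction r using sum_induction with
    | h0 => simp
    | hadd r s hr hs => rw [add_smul, add_smul, map_add, hr, hs]
    | hmul a b =>
      induction t with
      | zero => simp
      | tmul x y => rw [mul_smul_tmul, h]
      | add s t hs ht => rw [smul_add, map_add, map_add, smul_add, hs, ht]

/-- The tensor product of a `k[X]`-linear map and a `k[Y]`-linear map. -/
noncomputable def extMap (f : M →ₗ[MvPolynomial σ k] M') (g : N →ₗ[MvPolynomial τ k] N') :
    M ⊗[k] N →ₗ[MvPolynomial (σ ⊕ τ) k] M' ⊗[k] N' :=
  extLinear (TensorProduct.map (f.restrictScalars k) (g.restrictScalars k)).toAddMonoidHom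
    (fun a b x y => by simp [mul_smul_tmul])

lemma extMap_apply (f : M →ₗ[MvPolynomial σ k] M') (g : N →ₗ[MvPolynomial τ k] N') (t : M ⊗[k] N) :
    extMap f g t = TensorProduct.map (f.restrictScalars k) (g.restrictScalars k) t := rfl

@[simp]
lemma extMap_tmul (f : M →ₗ[MvPolynomial σ k] M') (g : N →ₗ[MvPolynomial τ k] N') (x : M) (y : N) :
    extMap f g (x ⊗ₜ y) = f x ⊗ₜ g y := rfl

lemma extMap_injective (f : M →ₗ[MvPolynomial σ k] M') (g : N →ₗ[MvPolynomial τ k] N')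
    (hf : Function.Injective f) (hg : Function.Injective g) : Function.Injective (extMap f g) :=
  TensorProduct.map_injective_of_flat_flat _ _ hf hg

lemma extMap_surjective (f : M →ₗ[MvPolynomial σ k] M') (g : N →ₗ[MvPolynomial τ k] N')
    (hf : Function.Surjective f) (hg : Function.Surjective g) : Function.Surjective (extMap f g) :=
  TensorProduct.map_surjective (g := f.restrictScalars k) (g' := g.restrictScalars k) hf hg

/-- The kernel of `M ⊗ N → M / M₀ ⊗ N / N₀` is spanned by `M₀ ⊗ N` and `M ⊗ N₀`. -/
lemma extMap_ker_induction {f : M →ₗ[MvPolynomial σ k] M'} {g : N →ₗ[MvPolynomial τ k] N'}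
    (hf : Function.Surjective f) (hg : Function.Surjective g) {p : M ⊗[k] N → Prop}
    (h0 : p 0) (hadd : ∀ r s, p r → p s → p (r + s))
    (hl : ∀ x y, f x = 0 → p (x ⊗ₜ y)) (hr : ∀ x y, g y = 0 → p (x ⊗ₜ y))
    {t : M ⊗[k] N} (ht : extMap f g t = 0) : p t := by
  have hker := TensorProduct.map_ker (f := (LinearMap.ker (f.restrictScalars k)).subtype)
    (f' := (LinearMap.ker (g.restrictScalars k)).subtype)
    (LinearMap.exact_subtype_ker_map _) hf (LinearMap.exact_subtype_ker_map _) hg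
  have ht' : t ∈ LinearMap.ker (TensorProduct.map (f.restrictScalars k) (g.restrictScalars k)) := ht
  rw [hker] at ht'
  obtain ⟨_, ⟨u, rfl⟩, _, ⟨v, rfl⟩, rfl⟩ := Submodule.mem_sup.1 ht'
  apply hadd
  · clear * - h0 hadd hr
    induction u with
    | zero => rw [map_zero]; exact h0
    | tmul x y => exact hr x y y.2
    | add s t hs ht => rw [map_add]; exact hadd _ _ hs ht
  · clear * - h0 hadd hl
    induction v with
    | zero => rw [map_zero]; exact h0
    | tmul x y => exact hl x y x.2
    | add s t hs ht => rw [map_add]; exact hadd _ _ hs ht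

lemma inl_smul_eq (a : MvPolynomial σ k) (t : M ⊗[k] N) :
    (rename Sum.inl a : MvPolynomial (σ ⊕ τ) k) • t =
      extMap (LinearMap.lsmul (MvPolynomial σ k) M a)
        (LinearMap.id : N →ₗ[MvPolynomial τ k] N) t := by
  induction t with
  | zero => simp
  | tmul x y => rw [inl_smul_tmul]; rfl
  | add s t hs ht => rw [smul_add, hs, ht, map_add]

lemma inr_smul_eq (b : MvPolynomial τ k) (t : M ⊗[k] N) :
    (rename Sum.inr b : MvPolynomial (σ ⊕ τ) k) • t =
      extMap (LinearMap.id : M →ₗ[MvPolynomial σ k] M)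
        (LinearMap.lsmul (MvPolynomial τ k) N b) t := by
  induction t with
  | zero => simp
  | tmul x y => rw [inr_smul_tmul]; rfl
  | add s t hs ht => rw [smul_add, hs, ht, map_add]

lemma inl_regular {a : MvPolynomial σ k} (ha : IsSMulRegular M a) :
    IsSMulRegular (M ⊗[k] N) (rename Sum.inl a : MvPolynomial (σ ⊕ τ) k) := by
  intro s t h
  simp only [inl_smul_eq] at h
  exact extMap_injective _ _ (fun _ _ h => ha h) (fun _ _ h => h) h

lemma inr_regular {b : MvPolynomial τ k} (hb : IsSMulRegular N b) :
    IsSMulRegular (M ⊗[k] N) (rename Sum.inr b : MvPolynomial (σ ⊕ τ) k) := by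
  intro s t h
  simp only [inr_smul_eq] at h
  exact extMap_injective _ _ (fun _ _ h => h) (fun _ _ h => hb h) h

/-- `(M ⊗ N) / a (M ⊗ N) ≃ M / a M ⊗ N`. -/
noncomputable def quotInlEquiv (a : MvPolynomial σ k) :
    QuotSMulTop (rename Sum.inl a : MvPolynomial (σ ⊕ τ) k) (M ⊗[k] N) ≃ₗ[MvPolynomial (σ ⊕ τ) k]
      QuotSMulTop a M ⊗[k] N :=
  quotSMulTopEquiv _
    (extMap (Submodule.mkQ (a • (⊤ : Submodule (MvPolynomial σ k) M)))
      (LinearMap.id : N →ₗ[MvPolynomial τ k] N))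
    (extMap_surjective _ _ (Submodule.mkQ_surjective _) Function.surjective_id) (by
      intro z
      constructor
      · intro hz
        refine extMap_ker_induction
          (p := fun z => ∃ w, (rename Sum.inl a : MvPolynomial (σ ⊕ τ) k) • w = z)
          (Submodule.mkQ_surjective _) Function.surjective_id ?_ ?_ ?_ ?_
          hz
        · exact ⟨0, by simp⟩
        · rintro _ _ ⟨r, rfl⟩ ⟨s, rfl⟩
          exact ⟨r + s, by simp⟩
        · intro x y hx
          rw [Submodule.mkQ_apply, Submodule.Quotient.mk_eq_zero, mem_smul_top_iff] at hx
          obtain ⟨w, rfl⟩ := hx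
          exact ⟨w ⊗ₜ y, inl_smul_tmul _ _ _⟩
        · rintro x y rfl
          exact ⟨0, by simp⟩
      · rintro ⟨w, rfl⟩
        rw [map_smul]
        induction w with
        | zero => simp
        | tmul x y =>
          rw [extMap_tmul, inl_smul_tmul, ← map_smul, Submodule.mkQ_apply,
            (Submodule.Quotient.mk_eq_zero _).2 ((mem_smul_top_iff _ _).2 ⟨x, rfl⟩), zero_tmul]
        | add s t hs ht => rw [map_add, smul_add, hs, ht, add_zero])

/-- `(M ⊗ N) / b (M ⊗ N) ≃ M ⊗ N / b N`. -/
noncomputable def quotInrEquiv (b : MvPolynomial τ k) :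
    QuotSMulTop (rename Sum.inr b : MvPolynomial (σ ⊕ τ) k) (M ⊗[k] N) ≃ₗ[MvPolynomial (σ ⊕ τ) k]
      M ⊗[k] QuotSMulTop b N :=
  quotSMulTopEquiv _
    (extMap (LinearMap.id : M →ₗ[MvPolynomial σ k] M)
      (Submodule.mkQ (b • (⊤ : Submodule (MvPolynomial τ k) N))))
    (extMap_surjective _ _ Function.surjective_id (Submodule.mkQ_surjective _)) (by
      intro z
      constructor
      · intro hz
        refine extMap_ker_induction
          (p := fun z => ∃ w, (rename Sum.inr b : MvPolynomial (σ ⊕ τ) k) • w = z)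
          Function.surjective_id (Submodule.mkQ_surjective _) ?_ ?_ ?_ ?_
          hz
        · exact ⟨0, by simp⟩
        · rintro _ _ ⟨r, rfl⟩ ⟨s, rfl⟩
          exact ⟨r + s, by simp⟩
        · rintro x y rfl
          exact ⟨0, by simp⟩
        · intro x y hy
          rw [Submodule.mkQ_apply, Submodule.Quotient.mk_eq_zero, mem_smul_top_iff] at hy
          obtain ⟨w, rfl⟩ := hy
          exact ⟨x ⊗ₜ w, inr_smul_tmul _ _ _⟩
      · rintro ⟨w, rfl⟩
        rw [map_smul]
        induction w with
        | zero => simp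
        | tmul x y =>
          rw [extMap_tmul, inr_smul_tmul, ← map_smul, Submodule.mkQ_apply,
            (Submodule.Quotient.mk_eq_zero _).2 ((mem_smul_top_iff _ _).2 ⟨y, rfl⟩), tmul_zero]
        | add s t hs ht => rw [map_add, smul_add, hs, ht, add_zero])

lemma rename_mem_maxHomIdeal {σ' : Type} (f : σ → σ') {a : MvPolynomial σ k}
    (ha : a ∈ maxHomIdeal k σ) :
    rename f a ∈ maxHomIdeal k σ' := by
  have : maxHomIdeal k σ ≤ (maxHomIdeal k σ').comap (rename f : _ →ₐ[k] MvPolynomial σ' k) := by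
    refine Ideal.span_le.2 ?_
    rintro _ ⟨i, rfl⟩
    change rename f (X i) ∈ maxHomIdeal k σ'
    rw [rename_X]
    exact Ideal.subset_span ⟨f i, rfl⟩
  exact this ha

/-- Depth is additive under external tensor products: concatenating maximal regular sequences of
the factors gives a regular sequence, and it is maximal since the tensor product of two
nonzero socle elements is a nonzero socle element. -/
theorem HasDepth.tensor {a b : ℕ} : ∀ {M : Type} [AddCommGroup M] [Module (MvPolynomial σ k) M]
    [Module k M] [IsScalarTower k (MvPolynomial σ k) M]
    {N : Type} [AddCommGroup N] [Module (MvPolynomial τ k) N]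
    [Module k N] [IsScalarTower k (MvPolynomial τ k) N], HasDepth (maxHomIdeal k σ) a M →
    HasDepth (maxHomIdeal k τ) b N → HasDepth (maxHomIdeal k (σ ⊕ τ)) (a + b) (M ⊗[k] N) := by
  induction a with
  | zero =>
    rw [zero_add]
    induction b with
    | zero =>
      rintro M _ _ _ _ N _ _ _ _ ⟨x, hx, hmx⟩ ⟨y, hy, hmy⟩
      refine ⟨x ⊗ₜ y, ?_, ?_⟩
      · have hx' : Function.Injective (LinearMap.toSpanSingleton k M x) := by
          rw [← LinearMap.ker_eq_bot]; exact LinearMap.ker_toSpanSingleton k hx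
        have hy' : Function.Injective (LinearMap.toSpanSingleton k N y) := by
          rw [← LinearMap.ker_eq_bot]; exact LinearMap.ker_toSpanSingleton k hy
        have := TensorProduct.map_injective_of_flat_flat _ _ hx' hy'
        intro h0
        have h1 : (1 : k) ⊗ₜ[k] (1 : k) = 0 := this (by simpa using h0)
        have h2 := congrArg (TensorProduct.lid k k) h1
        simp at h2
      · have : maxHomIdeal k (σ ⊕ τ) ≤
            LinearMap.ker (LinearMap.toSpanSingleton (MvPolynomial (σ ⊕ τ) k) (M ⊗[k] N)
              (x ⊗ₜ y)) := by
          refine Submodule.span_le.2 ?_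
          rintro _ ⟨i | j, rfl⟩
          · have := inl_smul_tmul (τ := τ) (X i : MvPolynomial σ k) x y
            rw [hmx _ (Ideal.subset_span (Set.mem_range_self i)), zero_tmul, rename_X] at this
            simpa using this
          · have := inr_smul_tmul (σ := σ) (X j : MvPolynomial τ k) x y
            rw [hmy _ (Ideal.subset_span (Set.mem_range_self j)), tmul_zero, rename_X] at this
            simpa using this
        intro r hr
        simpa using this hr
    | succ b ih =>
      rintro M _ _ _ _ N _ _ _ _ hM ⟨y, hy, hyr, hN⟩
      exact ⟨rename Sum.inr y, rename_mem_maxHomIdeal _ hy, inr_regular hyr,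
        (ih hM hN).congr (quotInrEquiv y).symm⟩
  | succ a ih =>
    rintro M _ _ _ _ N _ _ _ _ ⟨x, hx, hxr, hM⟩ hN
    rw [show a + 1 + b = a + b + 1 by omega]
    exact ⟨rename Sum.inl x, rename_mem_maxHomIdeal _ hx, inl_regular hxr,
        (ih hM hN).congr (quotInlEquiv x).symm⟩

end External

/-! ### The graded pieces of a sum of two filtrations -/

section Filtration

variable {k : Type} [Field k] {σ τ : Type}

/-- The graded piece `F i / F (i + 1)` of a filtration of a polynomial ring by ideals. -/
def grPiece (F : ℕ → Ideal (MvPolynomial σ k)) (i : ℕ) : Type :=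
  ↥(F i) ⧸ Submodule.comap (F i).subtype (F (i + 1))

section Instances

variable (F : ℕ → Ideal (MvPolynomial σ k)) (i : ℕ)

noncomputable instance : AddCommGroup (grPiece F i) :=
  inferInstanceAs (AddCommGroup (↥(F i) ⧸ Submodule.comap (F i).subtype (F (i + 1))))

noncomputable instance : Module (MvPolynomial σ k) (grPiece F i) :=
  inferInstanceAs (Module _ (↥(F i) ⧸ Submodule.comap (F i).subtype (F (i + 1))))

noncomputable instance : Module k (grPiece F i) :=
  inferInstanceAs (Module k (↥(F i) ⧸ Submodule.comap (F i).subtype (F (i + 1))))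

noncomputable instance : IsScalarTower k (MvPolynomial σ k) (grPiece F i) :=
  inferInstanceAs (IsScalarTower k _ (↥(F i) ⧸ Submodule.comap (F i).subtype (F (i + 1))))

/-- The projection `F i → F i / F (i + 1)`. -/
noncomputable def grMk : ↥(F i) →ₗ[MvPolynomial σ k] grPiece F i :=
  Submodule.mkQ (Submodule.comap (F i).subtype (F (i + 1)))

lemma grMk_surjective : Function.Surjective (grMk F i) :=
  Submodule.mkQ_surjective _

lemma grMk_eq_zero (x : ↥(F i)) : grMk F i x = 0 ↔ (x : MvPolynomial σ k) ∈ F (i + 1) :=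
  Submodule.Quotient.mk_eq_zero (Submodule.comap (F i).subtype (F (i + 1)))

/-- Since `k` is a field, `F i → F i / F (i + 1)` extends to a `k`-linear map on `k[X]`. -/
lemma exists_grMk_extend :
    ∃ p : MvPolynomial σ k →ₗ[k] grPiece F i, ∀ x : ↥(F i), p x = grMk F i x := by
  obtain ⟨p, hp⟩ := LinearMap.exists_extend (p := (F i).restrictScalars k)
    ((grMk F i).restrictScalars k)
  exact ⟨p, fun x => DFunLike.congr_fun hp x⟩

end Instances

/-- The multiplication map `I ⊗ J → k[X, Y]` for ideals `I` of `k[X]` and `J` of `k[Y]`. -/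
noncomputable def extMul (I : Ideal (MvPolynomial σ k)) (J : Ideal (MvPolynomial τ k)) :
    ↥I ⊗[k] ↥J →ₗ[MvPolynomial (σ ⊕ τ) k] MvPolynomial (σ ⊕ τ) k :=
  extLinear ((sumEquiv k σ τ).toLinearMap ∘ₗ
      TensorProduct.map (I.subtype.restrictScalars k) (J.subtype.restrictScalars k)).toAddMonoidHom
    (fun a b x y => by
      simp only [LinearMap.toAddMonoidHom_coe, LinearMap.comp_apply, TensorProduct.map_tmul,
        AlgEquiv.toLinearMap_apply, sumEquiv_tmul, LinearMap.coe_restrictScalars,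
        Submodule.subtype_apply, Submodule.coe_smul, smul_eq_mul, map_mul]
      ring)

lemma extMul_apply (I : Ideal (MvPolynomial σ k)) (J : Ideal (MvPolynomial τ k))
    (t : ↥I ⊗[k] ↥J) : extMul I J t = sumEquiv k σ τ
      (TensorProduct.map (I.subtype.restrictScalars k) (J.subtype.restrictScalars k) t) := rfl

lemma extMul_tmul (I : Ideal (MvPolynomial σ k)) (J : Ideal (MvPolynomial τ k)) (x : ↥I) (y : ↥J) :
    extMul I J (x ⊗ₜ y) = rename Sum.inl (x : MvPolynomial σ k) * rename Sum.inr
      (y : MvPolynomial τ k) := by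
  rw [extMul_apply, TensorProduct.map_tmul, sumEquiv_tmul]
  rfl

variable (F : ℕ → Ideal (MvPolynomial σ k)) (G : ℕ → Ideal (MvPolynomial τ k))

/-- The map `∏_{i + j = n} F i ⊗ G j → k[X, Y]` adding up the multiplication maps. -/
noncomputable def sumMul (n : ℕ) :
    (∀ p : ↥(Finset.HasAntidiagonal.antidiagonal n), ↥(F p.1.1) ⊗[k] ↥(G p.1.2)) →ₗ[
      MvPolynomial (σ ⊕ τ) k]
      MvPolynomial (σ ⊕ τ) k :=
  ∑ p : ↥(Finset.HasAntidiagonal.antidiagonal n), extMul (F p.1.1) (G p.1.2) ∘ₗ LinearMap.proj p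

lemma sumMul_apply (n : ℕ)
    (t : ∀ p : ↥(Finset.HasAntidiagonal.antidiagonal n), ↥(F p.1.1) ⊗[k] ↥(G p.1.2)) :
    sumMul F G n t = ∑ p, extMul (F p.1.1) (G p.1.2) (t p) := by
  simp [sumMul]

/-- The sum filtration: the `n`-th ideal is `∑_{i + j = n} F i · G j`. -/
noncomputable def sumFil (n : ℕ) : Ideal (MvPolynomial (σ ⊕ τ) k) :=
  LinearMap.range (sumMul F G n)

lemma extMul_mem_sumFil {i j n : ℕ} (h : i + j = n) (t : ↥(F i) ⊗[k] ↥(G j)) :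
    extMul (F i) (G j) t ∈ sumFil F G n := by
  classical
  let p : ↥(Finset.HasAntidiagonal.antidiagonal n) := ⟨(i, j), by simpa using h⟩
  refine ⟨Pi.single p t, ?_⟩
  rw [sumMul_apply, Finset.sum_eq_single p]
  · rw [Pi.single_eq_same]
  · intro q _ hq
    rw [Pi.single_eq_of_ne hq, map_zero]
  · simp

lemma mul_mem_sumFil {i j n : ℕ} (h : i + j = n) {a : MvPolynomial σ k} {b : MvPolynomial τ k}
    (ha : a ∈ F i) (hb : b ∈ G j) :
    (rename Sum.inl a * rename Sum.inr b : MvPolynomial (σ ⊕ τ) k) ∈ sumFil F G n := by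
  have := extMul_mem_sumFil F G h ((⟨a, ha⟩ : ↥(F i)) ⊗ₜ (⟨b, hb⟩ : ↥(G j)))
  rwa [extMul_tmul] at this

lemma sumFil_le {n : ℕ} {K : Ideal (MvPolynomial (σ ⊕ τ) k)}
    (h : ∀ i j, i + j = n → ∀ a ∈ F i, ∀ b ∈ G j,
      (rename Sum.inl a * rename Sum.inr b : MvPolynomial (σ ⊕ τ) k) ∈ K) : sumFil F G n ≤ K := by
  rintro _ ⟨t, rfl⟩
  rw [sumMul_apply]
  refine Submodule.sum_mem _ fun p _ => ?_
  induction t p with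
  | zero => rw [map_zero]; exact zero_mem _
  | tmul x y =>
    rw [extMul_tmul]
    exact h _ _ (Finset.HasAntidiagonal.mem_antidiagonal.1 p.2) _ x.2 _ y.2
  | add s t hs ht => rw [map_add]; exact add_mem hs ht

variable {F G}

/-- The map `∏ F i ⊗ G j → ∏ (F i / F (i + 1)) ⊗ (G j / G (j + 1))`. -/
noncomputable def grMap (F : ℕ → Ideal (MvPolynomial σ k)) (G : ℕ → Ideal (MvPolynomial τ k))
    (n : ℕ) :
    (∀ p : ↥(Finset.HasAntidiagonal.antidiagonal n), ↥(F p.1.1) ⊗[k] ↥(G p.1.2)) →ₗ[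
      MvPolynomial (σ ⊕ τ) k]
      (∀ p : ↥(Finset.HasAntidiagonal.antidiagonal n), grPiece F p.1.1 ⊗[k] grPiece G p.1.2) :=
  LinearMap.pi fun p : ↥(Finset.HasAntidiagonal.antidiagonal n) =>
    extMap (grMk F p.1.1) (grMk G p.1.2) ∘ₗ LinearMap.proj p

lemma grMap_apply (n : ℕ)
    (t : ∀ p : ↥(Finset.HasAntidiagonal.antidiagonal n), ↥(F p.1.1) ⊗[k] ↥(G p.1.2)) (p) :
    grMap F G n t p = extMap (grMk F p.1.1) (grMk G p.1.2) (t p) := rfl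

lemma grMap_surjective (n : ℕ) : Function.Surjective (grMap F G n) := by
  intro z
  choose t ht using fun p : ↥(Finset.HasAntidiagonal.antidiagonal n) =>
    extMap_surjective (grMk F p.1.1) (grMk G p.1.2) (grMk_surjective F _)
      (grMk_surjective G _) (z p)
  exact ⟨t, funext ht⟩

lemma extMul_separated (hF : Antitone F) (hG : Antitone G) (i j : ℕ) :
    ∃ f : MvPolynomial (σ ⊕ τ) k →ₗ[k] grPiece F i ⊗[k] grPiece G j,
      (∀ t, f (extMul (F i) (G j) t) = extMap (grMk F i) (grMk G j) t) ∧
      ∀ i' j', i < i' ∨ j < j' → ∀ t, f (extMul (F i') (G j') t) = 0 := by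
  obtain ⟨p, hp⟩ := exists_grMk_extend F i
  obtain ⟨q, hq⟩ := exists_grMk_extend G j
  refine ⟨TensorProduct.map p q ∘ₗ (sumEquiv k σ τ).symm.toLinearMap, ?_, ?_⟩
  · intro t
    simp only [LinearMap.comp_apply, AlgEquiv.toLinearMap_apply, extMul_apply,
      AlgEquiv.symm_apply_apply]
    induction t with
    | zero => simp
    | tmul x y => simp [hp, hq]
    | add s t hs ht => simp only [map_add, hs, ht]
  · intro i' j' h t
    simp only [LinearMap.comp_apply, AlgEquiv.toLinearMap_apply, extMul_apply,
      AlgEquiv.symm_apply_apply]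
    induction t with
    | zero => simp
    | tmul x y =>
      rw [TensorProduct.map_tmul, TensorProduct.map_tmul]
      rcases h with h | h
      · have hx : (x : MvPolynomial σ k) ∈ F (i + 1) := hF h x.2
        have : p x = 0 :=
          (hp ⟨x, hF (Nat.le_succ i) hx⟩).trans ((grMk_eq_zero F i _).2 hx)
        simp [this]
      · have hy : (y : MvPolynomial τ k) ∈ G (j + 1) := hG h y.2
        have : q y = 0 :=
          (hq ⟨y, hG (Nat.le_succ j) hy⟩).trans ((grMk_eq_zero G j _).2 hy)
        simp [this]
    | add s t hs ht => simp only [map_add, hs, ht, add_zero]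

lemma grMap_eq_zero_iff (hF : Antitone F) (hG : Antitone G) (n : ℕ)
    (t : ∀ p : ↥(Finset.HasAntidiagonal.antidiagonal n), ↥(F p.1.1) ⊗[k] ↥(G p.1.2)) :
    grMap F G n t = 0 ↔ sumMul F G n t ∈ sumFil F G (n + 1) := by
  constructor
  · intro h
    rw [sumMul_apply]
    refine Submodule.sum_mem _ fun p _ => ?_
    have hp := Finset.HasAntidiagonal.mem_antidiagonal.1 p.2
    refine extMap_ker_induction (p := fun z => extMul _ _ z ∈ sumFil F G (n + 1))
      (grMk_surjective F _) (grMk_surjective G _) ?_ ?_ ?_ ?_ (congrFun h p)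
    · rw [map_zero]; exact zero_mem _
    · intro r s hr hs
      rw [map_add]; exact add_mem hr hs
    · intro x y hx
      rw [extMul_tmul]
      exact mul_mem_sumFil F G (by omega) ((grMk_eq_zero _ _ _).1 hx) y.2
    · intro x y hy
      rw [extMul_tmul]
      exact mul_mem_sumFil F G (by omega) x.2 ((grMk_eq_zero _ _ _).1 hy)
  · rintro ⟨u, hu⟩
    funext p
    have hp := Finset.HasAntidiagonal.mem_antidiagonal.1 p.2
    obtain ⟨f, hf, hf'⟩ := extMul_separated hF hG p.1.1 p.1.2
    have h := congrArg f hu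
    rw [sumMul_apply, sumMul_apply, map_sum, map_sum, Finset.sum_eq_zero, Finset.sum_eq_single p,
      hf] at h
    · exact h.symm
    · intro q _ hqp
      refine hf' _ _ ?_ _
      have hq := Finset.HasAntidiagonal.mem_antidiagonal.1 q.2
      by_contra hc
      exact hqp (Subtype.ext (Prod.ext (by omega) (by omega)))
    · simp
    · intro q _
      refine hf' _ _ ?_ _
      have hq := Finset.HasAntidiagonal.mem_antidiagonal.1 q.2
      omega

/-- Two surjections with the same fibres have isomorphic targets. -/
lemma exists_equiv_of_fibre {R X Y Z : Type*} [Semiring R] [AddCommMonoid X] [AddCommMonoid Y]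
    [AddCommMonoid Z] [Module R X] [Module R Y] [Module R Z] (f : X →ₗ[R] Y) (g : X →ₗ[R] Z)
    (hf : Function.Surjective f) (hg : Function.Surjective g)
    (h : ∀ x y, f x = f y ↔ g x = g y) :
    ∃ e : Y ≃ₗ[R] Z, ∀ x, e (f x) = g x := by
  have key : ∀ x, g (Function.surjInv hf (f x)) = g x := fun x =>
    (h _ _).1 (Function.surjInv_eq hf (f x))
  let e : Y →ₗ[R] Z :=
    { toFun := fun y => g (Function.surjInv hf y)
      map_add' := fun y z => by
        obtain ⟨y, rfl⟩ := hf y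
        obtain ⟨z, rfl⟩ := hf z
        rw [← map_add, key, key, key, map_add]
      map_smul' := fun r y => by
        obtain ⟨y, rfl⟩ := hf y
        rw [← map_smul, key, key, map_smul, RingHom.id_apply] }
  have he : ∀ x, e (f x) = g x := key
  refine ⟨LinearEquiv.ofBijective e ⟨fun y z hyz => ?_, fun z => ?_⟩, he⟩
  · obtain ⟨y, rfl⟩ := hf y
    obtain ⟨z, rfl⟩ := hf z
    rw [he, he] at hyz
    exact (h _ _).2 hyz
  · obtain ⟨x, rfl⟩ := hg z
    exact ⟨f x, he x⟩

/-- The graded pieces of the sum filtration: `K n / K (n + 1)` is isomorphic to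
`∏_{i + j = n} (F i / F (i + 1)) ⊗ (G j / G (j + 1))`. -/
lemma nonempty_sumFil_equiv (hF : Antitone F) (hG : Antitone G) (n : ℕ) :
    Nonempty (grPiece (sumFil F G) n ≃ₗ[MvPolynomial (σ ⊕ τ) k]
      (∀ p : ↥(Finset.HasAntidiagonal.antidiagonal n),
        grPiece F p.1.1 ⊗[k] grPiece G p.1.2)) := by
  let T := (sumMul F G n).codRestrict (sumFil F G n) (fun t => ⟨t, rfl⟩)
  have hT : Function.Surjective T := by
    rintro ⟨_, t, rfl⟩
    exact ⟨t, rfl⟩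
  have hs : Function.Surjective (grMk (sumFil F G) n ∘ₗ T) := (grMk_surjective _ n).comp hT
  obtain ⟨e, -⟩ := exists_equiv_of_fibre (grMk (sumFil F G) n ∘ₗ T) (grMap F G n) hs
    (grMap_surjective n) (fun s t => by
      rw [← sub_eq_zero, ← map_sub, ← sub_eq_zero (a := grMap F G n s), ← map_sub]
      exact (grMk_eq_zero _ _ _).trans (grMap_eq_zero_iff hF hG n (s - t)).symm)
  exact ⟨e⟩

end Filtration

/-! ### Torsion-free modules over polynomial rings -/

section TorsionFree

variable {k : Type} [Field k] {σ τ : Type}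

lemma sumEquiv_smul (d : MvPolynomial (σ ⊕ τ) k) (t : MvPolynomial σ k ⊗[k] MvPolynomial τ k) :
    sumEquiv k σ τ (d • t) = d * sumEquiv k σ τ t := by
  induction d using sum_induction with
  | h0 => simp
  | hadd r s hr hs => rw [add_smul, map_add, hr, hs, add_mul]
  | hmul a b =>
    induction t with
    | zero => simp
    | tmul x y =>
      rw [mul_smul_tmul, sumEquiv_tmul, sumEquiv_tmul, smul_eq_mul, smul_eq_mul, map_mul, map_mul]
      ring
    | add s t hs ht => rw [smul_add, map_add, hs, ht, map_add, mul_add]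

variable {M N : Type}
  [AddCommGroup M] [Module (MvPolynomial σ k) M] [Module k M] [IsScalarTower k (MvPolynomial σ k) M]
  [AddCommGroup N] [Module (MvPolynomial τ k) N] [Module k N] [IsScalarTower k (MvPolynomial τ k) N]

/-- The external tensor product of two submodules of free modules is torsion-free, since it embeds
into a direct sum of copies of `k[X] ⊗ k[Y] = k[X, Y]`. -/
lemma free_smul_eq_zero {ι κ : Type} (f : M →ₗ[MvPolynomial σ k] (ι →₀ MvPolynomial σ k))
    (g : N →ₗ[MvPolynomial τ k] (κ →₀ MvPolynomial τ k)) (hf : Function.Injective f)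
    (hg : Function.Injective g) {d : MvPolynomial (σ ⊕ τ) k} (hd : d ≠ 0)
    {w : M ⊗[k] N} (h : d • w = 0) : w = 0 := by
  classical
  have hfg : Function.Injective (TensorProduct.map (f.restrictScalars k) (g.restrictScalars k)) :=
    TensorProduct.map_injective_of_flat_flat _ _ hf hg
  apply hfg
  apply (finsuppTensorFinsupp k k (MvPolynomial σ k) (MvPolynomial τ k) ι κ).injective
  rw [map_zero, map_zero]
  ext1 ⟨i, j⟩
  let f' : M →ₗ[MvPolynomial σ k] MvPolynomial σ k := Finsupp.lapply i ∘ₗ f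
  let g' : N →ₗ[MvPolynomial τ k] MvPolynomial τ k := Finsupp.lapply j ∘ₗ g
  have key : finsuppTensorFinsupp k k (MvPolynomial σ k) (MvPolynomial τ k) ι κ
      (TensorProduct.map (f.restrictScalars k) (g.restrictScalars k) w) (i, j) =
      extMap f' g' w := by
    clear h
    induction w with
    | zero => simp
    | tmul x y => rw [TensorProduct.map_tmul, finsuppTensorFinsupp_apply]; rfl
    | add s t hs ht => rw [map_add, map_add, map_add, Finsupp.add_apply, hs, ht]
  rw [key, Finsupp.zero_apply]
  have h1 := congrArg (extMap f' g') h
  rw [map_smul, map_zero] at h1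
  have h2 := congrArg (sumEquiv k σ τ) h1
  rw [sumEquiv_smul, map_zero] at h2
  exact (sumEquiv k σ τ).injective
    (((mul_eq_zero.1 h2).resolve_left hd).trans (map_zero _).symm)

/-- A module over a domain contains a free submodule with torsion quotient. -/
lemma exists_free_torsion (A M : Type) [CommRing A] [IsDomain A] [AddCommGroup M] [Module A M] :
    ∃ (ι : Type) (F : Submodule A M) (f : F →ₗ[A] (ι →₀ A)), Function.Injective f ∧
      ∀ x : M, ∃ a : A, a ≠ 0 ∧ a • x ∈ F := by
  obtain ⟨s, hs, hmax⟩ := exists_maximal_linearIndepOn A (id : M → M)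
  have hs' : LinearIndependent A (fun x : s => (x : M)) := hs
  refine ⟨s, Submodule.span A (Set.range fun x : s => (x : M)), hs'.repr,
    LinearMap.ker_eq_bot.1 hs'.repr_ker, fun x => ?_⟩
  rw [Subtype.range_coe]
  by_cases hx : x ∈ s
  · exact ⟨1, one_ne_zero, by rw [one_smul]; exact Submodule.subset_span hx⟩
  · obtain ⟨a, ha, h⟩ := hmax x hx
    exact ⟨a, ha, by simpa using h⟩

/-- The external tensor product of torsion-free modules is torsion-free. -/
lemma tensor_smul_eq_zero (hM : ∀ a : MvPolynomial σ k, a ≠ 0 → IsSMulRegular M a)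
    (hN : ∀ b : MvPolynomial τ k, b ≠ 0 → IsSMulRegular N b) {d : MvPolynomial (σ ⊕ τ) k}
    (hd : d ≠ 0) {z : M ⊗[k] N} (h : d • z = 0) : z = 0 := by
  obtain ⟨ι, F, f, hf, hf'⟩ := exists_free_torsion (MvPolynomial σ k) M
  obtain ⟨κ, G, g, hg, hg'⟩ := exists_free_torsion (MvPolynomial τ k) N
  have key : ∀ z : M ⊗[k] N, ∃ a : MvPolynomial σ k, a ≠ 0 ∧ ∃ b : MvPolynomial τ k, b ≠ 0 ∧
      ∃ w, extMap F.subtype G.subtype w =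
        (rename Sum.inl a * rename Sum.inr b : MvPolynomial (σ ⊕ τ) k) • z := by
    intro z
    induction z with
    | zero => exact ⟨1, one_ne_zero, 1, one_ne_zero, 0, by simp⟩
    | tmul x y =>
      obtain ⟨a, ha, hx⟩ := hf' x
      obtain ⟨b, hb, hy⟩ := hg' y
      exact ⟨a, ha, b, hb, (⟨_, hx⟩ : F) ⊗ₜ (⟨_, hy⟩ : G),
        by rw [extMap_tmul, mul_smul_tmul]; rfl⟩
    | add s t hs ht =>
      obtain ⟨a, ha, b, hb, v, hv⟩ := hs
      obtain ⟨a', ha', b', hb', w, hw⟩ := ht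
      refine ⟨a * a', mul_ne_zero ha ha', b * b', mul_ne_zero hb hb',
        (rename Sum.inl a' * rename Sum.inr b' : MvPolynomial (σ ⊕ τ) k) • v +
        (rename Sum.inl a * rename Sum.inr b : MvPolynomial (σ ⊕ τ) k) • w, ?_⟩
      rw [map_add, map_smul, map_smul, hv, hw, smul_add, smul_smul, smul_smul, map_mul, map_mul]
      congr 2
      · ring
      · ring
  obtain ⟨a, ha, b, hb, w, hw⟩ := key z
  have hw0 : w = 0 := by
    refine free_smul_eq_zero f g hf hg hd
      (extMap_injective F.subtype G.subtype F.subtype_injective G.subtype_injective ?_)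
    rw [map_smul, hw, smul_comm, h, smul_zero, map_zero]
  rw [hw0, map_zero, mul_smul] at hw
  exact isSMulRegular_iff_right_eq_zero_of_smul.1 (inr_regular (hN b hb)) _
    (isSMulRegular_iff_right_eq_zero_of_smul.1 (inl_regular (hM a ha)) _ hw.symm)

end TorsionFree

/-! ### Associated primes of external tensor products -/

section Associated

variable {k : Type} [Field k] {σ τ : Type}

variable {M N : Type}
  [AddCommGroup M] [Module (MvPolynomial σ k) M] [Module k M] [IsScalarTower k (MvPolynomial σ k) M]
  [AddCommGroup N] [Module (MvPolynomial τ k) N] [Module k N] [IsScalarTower k (MvPolynomial τ k) N]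

/-- The map `k[U, V] → k[X, Y]` induced by `k[U] → k[X]` and `k[V] → k[Y]`. -/
noncomputable def sumHom {s t : Type} (g : MvPolynomial s k →ₐ[k] MvPolynomial σ k)
    (h : MvPolynomial t k →ₐ[k] MvPolynomial τ k) :
    MvPolynomial (s ⊕ t) k →ₐ[k] MvPolynomial (σ ⊕ τ) k :=
  aeval (Sum.elim (fun i => rename Sum.inl (g (X i))) (fun i => rename Sum.inr (h (X i))))

lemma sumHom_inl {s t : Type} (g : MvPolynomial s k →ₐ[k] MvPolynomial σ k)
    (h : MvPolynomial t k →ₐ[k] MvPolynomial τ k) (a : MvPolynomial s k) :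
    sumHom g h (rename Sum.inl a) = rename Sum.inl (g a) := by
  have : (sumHom g h).comp (rename Sum.inl) = (rename Sum.inl).comp g := by
    apply MvPolynomial.algHom_ext
    intro i
    simp [sumHom]
  exact DFunLike.congr_fun this a

lemma sumHom_inr {s t : Type} (g : MvPolynomial s k →ₐ[k] MvPolynomial σ k)
    (h : MvPolynomial t k →ₐ[k] MvPolynomial τ k) (b : MvPolynomial t k) :
    sumHom g h (rename Sum.inr b) = rename Sum.inr (h b) := by
  have : (sumHom g h).comp (rename Sum.inr) = (rename Sum.inr).comp h := by
    apply MvPolynomial.algHom_ext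
    intro i
    simp [sumHom]
  exact DFunLike.congr_fun this b

/-- `tensor_smul_eq_zero` for modules that are torsion-free after restriction of scalars. -/
lemma tensor_sumHom_smul_eq_zero {s t : Type} (g : MvPolynomial s k →ₐ[k] MvPolynomial σ k)
    (h : MvPolynomial t k →ₐ[k] MvPolynomial τ k)
    (hM : ∀ a : MvPolynomial s k, a ≠ 0 → IsSMulRegular M (g a))
    (hN : ∀ b : MvPolynomial t k, b ≠ 0 → IsSMulRegular N (h b)) {d : MvPolynomial (s ⊕ t) k}
    (hd : d ≠ 0) {z : M ⊗[k] N} (hz : sumHom g h d • z = 0) : z = 0 := by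
  let : Module (MvPolynomial s k) M := Module.compHom M g.toRingHom
  let : Module (MvPolynomial t k) N := Module.compHom N h.toRingHom
  have : IsScalarTower k (MvPolynomial s k) M := ⟨fun c a x => by
    change g (c • a) • x = c • (g a • x)
    rw [map_smul, smul_assoc]⟩
  have : IsScalarTower k (MvPolynomial t k) N := ⟨fun c a x => by
    change h (c • a) • x = c • (h a • x)
    rw [map_smul, smul_assoc]⟩
  have key : ∀ (d : MvPolynomial (s ⊕ t) k) (z : M ⊗[k] N), d • z = sumHom g h d • z := by
    intro d z
    induction d using sum_induction with
    | h0 => rw [map_zero, zero_smul, zero_smul]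
    | hadd r s hr hs => rw [map_add, add_smul, add_smul, hr, hs]
    | hmul a b =>
      induction z with
      | zero => rw [smul_zero, smul_zero]
      | tmul x y =>
        rw [map_mul, sumHom_inl, sumHom_inr, mul_smul_tmul, mul_smul_tmul]
        rfl
      | add s t hs ht => rw [smul_add, smul_add, hs, ht]
  exact tensor_smul_eq_zero (fun a ha => hM a ha) (fun b hb => hN b hb) hd ((key d z).trans hz)

lemma isIntegralElem_of_comm {A B C D : Type} [CommRing A] [CommRing B] [CommRing C] [CommRing D]
    (f : A →+* B) (g : B →+* D) (i : A →+* C) (j : C →+* D) (h : g.comp f = j.comp i) {b : B}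
    (hb : f.IsIntegralElem b) : j.IsIntegralElem (g b) := by
  obtain ⟨p, hp, hp'⟩ := hb
  refine ⟨p.map i, hp.map i, ?_⟩
  rw [Polynomial.eval₂_map, ← h, ← Polynomial.hom_eval₂, hp', map_zero]

/-- If `k[U] → k[X] / P` and `k[V] → k[Y] / Q` are integral and `𝔮` lies above `P` and `Q`,
then `k[U, V] → k[X, Y] / 𝔮` is integral. -/
lemma sumHom_isIntegral {s t : Type} (g : MvPolynomial s k →ₐ[k] MvPolynomial σ k)
    (h : MvPolynomial t k →ₐ[k] MvPolynomial τ k) {P : Ideal (MvPolynomial σ k)}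
    {Q : Ideal (MvPolynomial τ k)}
    (hg : ((Ideal.Quotient.mk P).comp g.toRingHom).IsIntegral)
    (hh : ((Ideal.Quotient.mk Q).comp h.toRingHom).IsIntegral)
    {𝔮 : Ideal (MvPolynomial (σ ⊕ τ) k)}
    (hP : ∀ a ∈ P, rename Sum.inl a ∈ 𝔮) (hQ : ∀ b ∈ Q, rename Sum.inr b ∈ 𝔮) :
    ((Ideal.Quotient.mk 𝔮).comp (sumHom g h).toRingHom).IsIntegral := by
  intro r
  obtain ⟨r, rfl⟩ := Ideal.Quotient.mk_surjective r
  induction r using sum_induction with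
  | h0 => rw [map_zero]; exact RingHom.isIntegralElem_zero _
  | hadd r s hr hs => rw [map_add]; exact hr.add _ hs
  | hmul a b =>
    rw [map_mul]
    refine RingHom.IsIntegralElem.mul _ ?_ ?_
    · let f : MvPolynomial σ k ⧸ P →+* MvPolynomial (σ ⊕ τ) k ⧸ 𝔮 :=
        Ideal.Quotient.lift P ((Ideal.Quotient.mk 𝔮).comp
          (rename Sum.inl : MvPolynomial σ k →ₐ[k] MvPolynomial (σ ⊕ τ) k).toRingHom)
          (fun a ha => Ideal.Quotient.eq_zero_iff_mem.2 (hP a ha))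
      refine isIntegralElem_of_comm _ f
        (rename Sum.inl : MvPolynomial s k →ₐ[k] MvPolynomial (s ⊕ t) k).toRingHom _ ?_
        (hg (Ideal.Quotient.mk P a))
      refine RingHom.ext fun x => ?_
      exact congrArg (Ideal.Quotient.mk 𝔮) (sumHom_inl g h x).symm
    · let f : MvPolynomial τ k ⧸ Q →+* MvPolynomial (σ ⊕ τ) k ⧸ 𝔮 :=
        Ideal.Quotient.lift Q ((Ideal.Quotient.mk 𝔮).comp
          (rename Sum.inr : MvPolynomial τ k →ₐ[k] MvPolynomial (σ ⊕ τ) k).toRingHom)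
          (fun a ha => Ideal.Quotient.eq_zero_iff_mem.2 (hQ a ha))
      refine isIntegralElem_of_comm _ f
        (rename Sum.inr : MvPolynomial t k →ₐ[k] MvPolynomial (s ⊕ t) k).toRingHom _ ?_
        (hh (Ideal.Quotient.mk Q b))
      refine RingHom.ext fun x => ?_
      exact congrArg (Ideal.Quotient.mk 𝔮) (sumHom_inr g h x).symm

/-- Noether normalization of `k[X] / P`, lifted to `k[X]`. -/
lemma exists_noether [Finite σ] (P : Ideal (MvPolynomial σ k)) [P.IsPrime] :
    ∃ (s : ℕ) (g : MvPolynomial (Fin s) k →ₐ[k] MvPolynomial σ k),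
      (∀ a, g a ∈ P → a = 0) ∧ ((Ideal.Quotient.mk P).comp g.toRingHom).IsIntegral := by
  obtain ⟨s, g, hg, hg'⟩ := exists_integral_inj_algHom_of_fg k (MvPolynomial σ k ⧸ P)
  choose f hf using fun i => Ideal.Quotient.mk_surjective (g (X i))
  have hfg : (Ideal.Quotient.mkₐ k P).comp (aeval f) = g := by
    apply MvPolynomial.algHom_ext
    intro i
    simp [hf]
  refine ⟨s, aeval f, fun a ha => hg ?_, ?_⟩
  · rw [map_zero, ← hfg]
    exact Ideal.Quotient.eq_zero_iff_mem.2 ha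
  · have : (Ideal.Quotient.mk P).comp (aeval f : MvPolynomial (Fin s) k →ₐ[k] _).toRingHom =
        g.toRingHom := by rw [← hfg]; rfl
    rw [this]
    exact hg'

/-- The elements of `M` killed by an element outside the prime ideal `P`. -/
def primeTorsion {A : Type} [CommRing A] (P : Ideal A) [hP : P.IsPrime] (M : Type) [AddCommGroup M]
    [Module A M] : Submodule A M where
  carrier := {m | ∃ s ∉ P, s • m = 0}
  zero_mem' := ⟨1, fun h => hP.ne_top ((Ideal.eq_top_iff_one P).2 h), smul_zero 1⟩
  add_mem' := by
    rintro x y ⟨s, hs, hx⟩ ⟨t, ht, hy⟩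
    refine ⟨s * t, fun h => (hP.mem_or_mem h).elim hs ht, ?_⟩
    rw [smul_add, mul_smul, mul_smul, hy, smul_zero, smul_comm, hx, smul_zero, add_zero]
  smul_mem' := by
    rintro c x ⟨s, hs, hx⟩
    exact ⟨s, hs, by rw [smul_comm, hx, smul_zero]⟩

lemma primeTorsion_regular {A : Type} [CommRing A] (P : Ideal A) [hP : P.IsPrime] (M : Type)
    [AddCommGroup M] [Module A M] {a : A} (ha : a ∉ P) :
    IsSMulRegular (M ⧸ primeTorsion P M) a := by
  rw [isSMulRegular_iff_right_eq_zero_of_smul]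
  intro m hm
  obtain ⟨m, rfl⟩ := Submodule.mkQ_surjective _ m
  rw [← map_smul, Submodule.mkQ_apply, Submodule.Quotient.mk_eq_zero] at hm
  obtain ⟨s, hs, hm⟩ := hm
  refine (Submodule.Quotient.mk_eq_zero _).2 ⟨s * a, fun h => (hP.mem_or_mem h).elim hs ha, ?_⟩
  rw [mul_smul, hm]

variable [Finite σ] [Finite τ]

/-- The annihilator `𝔭` of an element of `M ⊗ N`, if prime and lying above minimal primes `P` of
`I` and `Q` of `J`, is minimal over `I + J`: with Noether normalizations `k[U]` of `k[X] / P` and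
`k[V]` of `k[Y] / Q`, it meets `k[U, V]` trivially, whereas `k[X, Y] / 𝔮` is integral over
`k[U, V]` for every prime `𝔮` between `I + J` and `𝔭`. -/
lemma mem_minimalPrimes_of_annihilator {I : Ideal (MvPolynomial σ k)}
    {J : Ideal (MvPolynomial τ k)} {𝔭 : Ideal (MvPolynomial (σ ⊕ τ) k)} (h𝔭 : 𝔭.IsPrime)
    (hP : 𝔭.comap (rename Sum.inl : MvPolynomial σ k →ₐ[k] MvPolynomial (σ ⊕ τ) k) ∈
      I.minimalPrimes)
    (hQ : 𝔭.comap (rename Sum.inr : MvPolynomial τ k →ₐ[k] MvPolynomial (σ ⊕ τ) k) ∈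
      J.minimalPrimes)
    {z : M ⊗[k] N} (hz : ∀ r, r ∈ 𝔭 ↔ r • z = 0) :
    𝔭 ∈ (I.map (rename Sum.inl : MvPolynomial σ k →ₐ[k] MvPolynomial (σ ⊕ τ) k) +
      J.map (rename Sum.inr : MvPolynomial τ k →ₐ[k] MvPolynomial (σ ⊕ τ) k)).minimalPrimes := by
  set P := 𝔭.comap (rename Sum.inl : MvPolynomial σ k →ₐ[k] MvPolynomial (σ ⊕ τ) k) with hPdef
  set Q := 𝔭.comap (rename Sum.inr : MvPolynomial τ k →ₐ[k] MvPolynomial (σ ⊕ τ) k) with hQdef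
  have hPp : P.IsPrime := hP.1.1
  have hQp : Q.IsPrime := hQ.1.1
  obtain ⟨s, g, hg, hgi⟩ := exists_noether P
  obtain ⟨t, h, hh, hhi⟩ := exists_noether Q
  have hcomap : ∀ d, sumHom g h d ∈ 𝔭 → d = 0 := by
    intro d hd
    by_contra hd0
    rw [hz] at hd
    have h0 : extMap (Submodule.mkQ (primeTorsion P M)) (Submodule.mkQ (primeTorsion Q N)) z = 0 :=
      tensor_sumHom_smul_eq_zero g h
        (fun a ha => primeTorsion_regular P M fun h => ha (hg a h))
        (fun b hb => primeTorsion_regular Q N fun h => hb (hh b h)) hd0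
        (by rw [← map_smul, hd, map_zero])
    have h1 : ∃ r ∉ 𝔭, r • z = 0 := by
      refine extMap_ker_induction (p := fun z => ∃ r ∉ 𝔭, r • z = 0)
        (Submodule.mkQ_surjective _) (Submodule.mkQ_surjective _) ?_ ?_ ?_ ?_ h0
      · exact ⟨1, fun h => h𝔭.ne_top ((Ideal.eq_top_iff_one 𝔭).2 h), smul_zero 1⟩
      · rintro x y ⟨s, hs, hx⟩ ⟨t, ht, hy⟩
        refine ⟨s * t, fun h => (h𝔭.mem_or_mem h).elim hs ht, ?_⟩
        rw [smul_add, mul_smul, mul_smul, hy, smul_zero, smul_comm, hx, smul_zero, add_zero]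
      · intro x y hx
        obtain ⟨s, hs, hx⟩ := (Submodule.Quotient.mk_eq_zero _).1 hx
        exact ⟨rename Sum.inl s, hs, by rw [inl_smul_tmul, hx, zero_tmul]⟩
      · intro x y hy
        obtain ⟨s, hs, hy⟩ := (Submodule.Quotient.mk_eq_zero _).1 hy
        exact ⟨rename Sum.inr s, hs, by rw [inr_smul_tmul, hy, tmul_zero]⟩
    obtain ⟨r, hr, hrz⟩ := h1
    exact hr ((hz r).2 hrz)
  refine ⟨⟨h𝔭, sup_le (Ideal.map_le_iff_le_comap.2 hP.1.2)
    (Ideal.map_le_iff_le_comap.2 hQ.1.2)⟩, ?_⟩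
  rintro 𝔮 ⟨h𝔮, hle⟩ h𝔮𝔭
  have hIq : I ≤ 𝔮.comap (rename Sum.inl : MvPolynomial σ k →ₐ[k] MvPolynomial (σ ⊕ τ) k) :=
    Ideal.map_le_iff_le_comap.1 (le_sup_left.trans hle)
  have hJq : J ≤ 𝔮.comap (rename Sum.inr : MvPolynomial τ k →ₐ[k] MvPolynomial (σ ⊕ τ) k) :=
    Ideal.map_le_iff_le_comap.1 (le_sup_right.trans hle)
  have hintegral := sumHom_isIntegral g h hgi hhi (𝔮 := 𝔮)
    (fun a ha => hP.2 ⟨Ideal.IsPrime.comap _, hIq⟩ (Ideal.comap_mono h𝔮𝔭) ha)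
    (fun b hb => hQ.2 ⟨Ideal.IsPrime.comap _, hJq⟩ (Ideal.comap_mono h𝔮𝔭) hb)
  intro x hx
  by_contra hxq
  let : Algebra (MvPolynomial (Fin s ⊕ Fin t) k) (MvPolynomial (σ ⊕ τ) k ⧸ 𝔮) :=
    ((Ideal.Quotient.mk 𝔮).comp (sumHom g h).toRingHom).toAlgebra
  refine Ideal.comap_ne_bot_of_integral_mem (R := MvPolynomial (Fin s ⊕ Fin t) k)
    (I := 𝔭.map (Ideal.Quotient.mk 𝔮)) (x := Ideal.Quotient.mk 𝔮 x)
    (fun h => hxq (Ideal.Quotient.eq_zero_iff_mem.1 h)) (Ideal.mem_map_of_mem _ hx) (hintegral _) ?_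
  refine (Submodule.eq_bot_iff _).2 fun d hd => hcomap d ?_
  obtain ⟨y, hy, hyd⟩ := (Ideal.mem_map_iff_of_surjective _ Ideal.Quotient.mk_surjective).1
    (Ideal.mem_comap.1 hd)
  have : y - sumHom g h d ∈ 𝔮 := Ideal.Quotient.eq.1 hyd
  have h2 := 𝔭.sub_mem hy (h𝔮𝔭 this)
  rwa [sub_sub_cancel] at h2

/-- By prime avoidance, a prime containing `I` and contained in the union of the minimal primes of
`I` is one of them. -/
lemma mem_minimalPrimes_of_avoid {A : Type} [CommRing A] [IsNoetherianRing A] {I P : Ideal A}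
    (hP : P.IsPrime) (hIP : I ≤ P) (h : ∀ a ∈ P, ∃ P' ∈ I.minimalPrimes, a ∈ P') :
    P ∈ I.minimalPrimes := by
  obtain ⟨P', hP', hle⟩ := (Ideal.subset_union_prime_finite
    (Ideal.finite_minimalPrimes_of_isNoetherianRing A I) (f := id) ⊥ ⊥
    (fun i hi _ _ => hi.1.1) (I := P)).1 (fun a ha => by simpa using h a ha)
  have : P = P' := le_antisymm hle (hP'.2 ⟨hP, hIP⟩ hle)
  rwa [this]

/-- If the elements outside the minimal primes of `I` (of `J`) are regular on `M` (on `N`), then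
an element of `M ⊗ N` vanishing locally at the minimal primes of `I + J` vanishes. -/
lemma eq_zero_of_locally_eq_zero {I : Ideal (MvPolynomial σ k)} {J : Ideal (MvPolynomial τ k)}
    (hI : ∀ a ∈ I, ∀ x : M, a • x = 0) (hJ : ∀ b ∈ J, ∀ y : N, b • y = 0)
    (hM : ∀ a, (∀ P ∈ I.minimalPrimes, a ∉ P) → IsSMulRegular M a)
    (hN : ∀ b, (∀ Q ∈ J.minimalPrimes, b ∉ Q) → IsSMulRegular N b)
    {z : M ⊗[k] N}
    (hz : ∀ 𝔭 ∈ (I.map (rename Sum.inl : MvPolynomial σ k →ₐ[k] MvPolynomial (σ ⊕ τ) k) +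
      J.map (rename Sum.inr : MvPolynomial τ k →ₐ[k] MvPolynomial (σ ⊕ τ) k)).minimalPrimes,
      ∃ r ∉ 𝔭, r • z = 0) : z = 0 := by
  by_contra hz0
  obtain ⟨𝔭, h𝔭, hle⟩ := exists_le_isAssociatedPrime_of_isNoetherianRing
    (MvPolynomial (σ ⊕ τ) k) z hz0
  obtain ⟨hprime, w, hw⟩ := isAssociatedPrime_iff.1 h𝔭
  have hw' : ∀ r, r ∈ 𝔭 ↔ r • w = 0 := fun r => by
    rw [hw, Submodule.mem_colon_singleton, Submodule.mem_bot]
  have hw0 : w ≠ 0 := by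
    rintro rfl
    exact hprime.ne_top ((Ideal.eq_top_iff_one 𝔭).2 ((hw' 1).2 (smul_zero 1)))
  have hP : 𝔭.comap (rename Sum.inl : MvPolynomial σ k →ₐ[k] MvPolynomial (σ ⊕ τ) k) ∈
      I.minimalPrimes := by
    refine mem_minimalPrimes_of_avoid (Ideal.IsPrime.comap _) (fun a ha => (hw' _).2 ?_) ?_
    · clear * - hI ha
      induction w with
      | zero => rw [smul_zero]
      | tmul x y => exact (inl_smul_tmul a x y).trans (by rw [hI a ha, zero_tmul])
      | add s t hs ht => rw [smul_add, hs, ht, add_zero]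
    · intro a ha
      by_contra! hc
      exact hw0 (isSMulRegular_iff_right_eq_zero_of_smul.1 (inl_regular (hM a hc)) _
        ((hw' _).1 ha))
  have hQ : 𝔭.comap (rename Sum.inr : MvPolynomial τ k →ₐ[k] MvPolynomial (σ ⊕ τ) k) ∈
      J.minimalPrimes := by
    refine mem_minimalPrimes_of_avoid (Ideal.IsPrime.comap _) (fun a ha => (hw' _).2 ?_) ?_
    · clear * - hJ ha
      induction w with
      | zero => rw [smul_zero]
      | tmul x y => exact (inr_smul_tmul a x y).trans (by rw [hJ a ha, tmul_zero])
      | add s t hs ht => rw [smul_add, hs, ht, add_zero]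
    · intro a ha
      by_contra! hc
      exact hw0 (isSMulRegular_iff_right_eq_zero_of_smul.1 (inr_regular (hN a hc)) _
        ((hw' _).1 ha))
  obtain ⟨r, hr, hrz⟩ := hz 𝔭 (mem_minimalPrimes_of_annihilator hprime hP hQ hw')
  exact hr (hle (Submodule.mem_colon_singleton.2 ((Submodule.mem_bot _).2 hrz)))

end Associated

/-! ### Symbolic powers -/

section SymbPow

variable {R : Type*} [CommRing R] {Q : Ideal R}

lemma mem_symbPow {n : ℕ} {f : R} :
    f ∈ symbPow Q n ↔ ∀ P ∈ Q.minimalPrimes, ∃ s ∉ P, s * f ∈ Q ^ n := by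
  simp only [symbPow, Submodule.mem_iInf]
  refine forall₂_congr fun P hP => ?_
  have : P.IsPrime := hP.1.1
  exact IsLocalization.algebraMap_mem_map_algebraMap_iff P.primeCompl _ _ _

lemma symbPow_zero : symbPow Q 0 = ⊤ := by
  refine eq_top_iff.2 fun f _ => mem_symbPow.2 fun P hP => ⟨1, ?_, by simp⟩
  exact fun h => hP.1.1.ne_top ((Ideal.eq_top_iff_one _).2 h)

lemma symbPow_antitone (Q : Ideal R) : Antitone (symbPow Q) := by
  refine fun i j hij f hf => mem_symbPow.2 fun P hP => ?_
  obtain ⟨s, hs, h⟩ := mem_symbPow.1 hf P hP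
  exact ⟨s, hs, Ideal.pow_le_pow_right hij h⟩

lemma pow_le_symbPow (Q : Ideal R) (n : ℕ) : Q ^ n ≤ symbPow Q n :=
  fun f hf => mem_symbPow.2 fun P hP =>
    ⟨1, fun h => hP.1.1.ne_top ((Ideal.eq_top_iff_one _).2 h), by simpa using hf⟩

lemma mul_mem_symbPow_succ {n : ℕ} {a f : R} (ha : a ∈ Q) (hf : f ∈ symbPow Q n) :
    a * f ∈ symbPow Q (n + 1) := by
  refine mem_symbPow.2 fun P hP => ?_
  obtain ⟨s, hs, h⟩ := mem_symbPow.1 hf P hP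
  refine ⟨s, hs, ?_⟩
  rw [mul_left_comm, pow_succ']
  exact Ideal.mul_mem_mul ha h

lemma mem_symbPow_of_mul_mem {n : ℕ} {s f : R} (hs : ∀ P ∈ Q.minimalPrimes, s ∉ P)
    (h : s * f ∈ symbPow Q n) : f ∈ symbPow Q n := by
  refine mem_symbPow.2 fun P hP => ?_
  obtain ⟨t, ht, h⟩ := mem_symbPow.1 h P hP
  refine ⟨t * s, fun hts => (hP.1.1.mem_or_mem hts).elim ht (hs P hP), ?_⟩
  rwa [mul_assoc]

end SymbPow

section GradedPieces

variable {k : Type} [Field k] {σ τ : Type}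

lemma smul_grPiece_eq_zero {I : Ideal (MvPolynomial σ k)} {i : ℕ} {a : MvPolynomial σ k}
    (ha : a ∈ I) (x : grPiece (symbPow I) i) : a • x = 0 := by
  obtain ⟨x, rfl⟩ := grMk_surjective _ i x
  rw [← map_smul, grMk_eq_zero]
  exact mul_mem_symbPow_succ ha x.2

lemma grPiece_regular {I : Ideal (MvPolynomial σ k)} {i : ℕ} {a : MvPolynomial σ k}
    (ha : ∀ P ∈ I.minimalPrimes, a ∉ P) : IsSMulRegular (grPiece (symbPow I) i) a := by
  rw [isSMulRegular_iff_right_eq_zero_of_smul]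
  intro x hx
  obtain ⟨x, rfl⟩ := grMk_surjective _ i x
  rw [← map_smul, grMk_eq_zero] at hx
  exact (grMk_eq_zero _ _ _).2 (mem_symbPow_of_mul_mem ha hx)

/-- The extension `I R + J R` is the kernel of `R → k[X]/I ⊗ k[Y]/J`. -/
lemma exists_ker_eq_sum (I : Ideal (MvPolynomial σ k)) (J : Ideal (MvPolynomial τ k)) :
    ∃ f : MvPolynomial (σ ⊕ τ) k →ₗ[MvPolynomial (σ ⊕ τ) k]
        (MvPolynomial σ k ⧸ I) ⊗[k] (MvPolynomial τ k ⧸ J),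
      LinearMap.ker f = I.map (rename Sum.inl : MvPolynomial σ k →ₐ[k] MvPolynomial (σ ⊕ τ) k) +
        J.map (rename Sum.inr : MvPolynomial τ k →ₐ[k] MvPolynomial (σ ⊕ τ) k) := by
  let g := extMap (Submodule.mkQ I) (Submodule.mkQ J)
  let f : MvPolynomial (σ ⊕ τ) k →ₗ[MvPolynomial (σ ⊕ τ) k]
      (MvPolynomial σ k ⧸ I) ⊗[k] (MvPolynomial τ k ⧸ J) :=
    LinearMap.toSpanSingleton _ _ (Submodule.mkQ I 1 ⊗ₜ Submodule.mkQ J 1)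
  have hf : ∀ t, f (sumEquiv k σ τ t) = g t := by
    intro t
    induction t with
    | zero => simp
    | tmul a b =>
      rw [sumEquiv_tmul, LinearMap.toSpanSingleton_apply, mul_smul_tmul, ← map_smul, ← map_smul,
        smul_eq_mul, mul_one, smul_eq_mul, mul_one]
      rfl
    | add s t hs ht => rw [map_add, map_add, map_add, hs, ht]
  refine ⟨f, le_antisymm ?_ (sup_le ?_ ?_)⟩
  · intro y hy
    obtain ⟨t, rfl⟩ := (sumEquiv k σ τ).surjective y
    rw [LinearMap.mem_ker, hf] at hy
    refine extMap_ker_induction (p := fun t => sumEquiv k σ τ t ∈ _) (Submodule.mkQ_surjective _)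
      (Submodule.mkQ_surjective _) ?_ ?_ ?_ ?_ hy
    · rw [map_zero]; exact zero_mem _
    · intro r s hr hs
      rw [map_add]; exact add_mem hr hs
    · intro a b ha
      rw [Submodule.mkQ_apply, Submodule.Quotient.mk_eq_zero] at ha
      rw [sumEquiv_tmul]
      exact Ideal.mul_mem_right _ _ (Submodule.mem_sup_left (Ideal.mem_map_of_mem _ ha))
    · intro a b hb
      rw [Submodule.mkQ_apply, Submodule.Quotient.mk_eq_zero] at hb
      rw [sumEquiv_tmul]
      exact Ideal.mul_mem_left _ _ (Submodule.mem_sup_right (Ideal.mem_map_of_mem _ hb))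
  · refine Ideal.map_le_iff_le_comap.2 fun a ha => ?_
    change f (rename Sum.inl a) = 0
    rw [LinearMap.toSpanSingleton_apply, inl_smul_tmul, ← map_smul, smul_eq_mul, mul_one,
      Submodule.mkQ_apply, (Submodule.Quotient.mk_eq_zero _).2 ha, zero_tmul]
  · refine Ideal.map_le_iff_le_comap.2 fun b hb => ?_
    change f (rename Sum.inr b) = 0
    rw [LinearMap.toSpanSingleton_apply, inr_smul_tmul, ← map_smul (Submodule.mkQ J), smul_eq_mul,
      mul_one, Submodule.mkQ_apply J, (Submodule.Quotient.mk_eq_zero _).2 hb, tmul_zero]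

lemma quotient_isSMulRegular {A : Type*} [CommRing A] {P : Ideal A} (hP : P.IsPrime) {s : A}
    (hs : s ∉ P) : IsSMulRegular (A ⧸ P) s := by
  rw [isSMulRegular_iff_right_eq_zero_of_smul]
  intro x hx
  obtain ⟨x, rfl⟩ := Submodule.mkQ_surjective P x
  rw [← map_smul, Submodule.mkQ_apply, Submodule.Quotient.mk_eq_zero] at hx
  exact (Submodule.Quotient.mk_eq_zero _).2 ((hP.mem_or_mem hx).resolve_left hs)

lemma minimalPrimes_mono {A : Type*} [CommRing A] {I I' P : Ideal A} (h : I ≤ I') (h' : I' ≤ P)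
    (hP : P ∈ I.minimalPrimes) : P ∈ I'.minimalPrimes :=
  ⟨⟨hP.1.1, h'⟩, fun _ hq hqP => hP.2 ⟨hq.1, h.trans hq.2⟩ hqP⟩

section Kernel

variable {M N : Type} [AddCommGroup M] [Module (MvPolynomial σ k) M] [Module k M]
  [IsScalarTower k (MvPolynomial σ k) M] [AddCommGroup N] [Module (MvPolynomial τ k) N]
  [Module k N] [IsScalarTower k (MvPolynomial τ k) N]

lemma mem_ker_of_inl_mul {s : MvPolynomial σ k} (hs : IsSMulRegular M s)
    (f : MvPolynomial (σ ⊕ τ) k →ₗ[MvPolynomial (σ ⊕ τ) k] M ⊗[k] N) {y : MvPolynomial (σ ⊕ τ) k}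
    (h : rename Sum.inl s * y ∈ LinearMap.ker f) : y ∈ LinearMap.ker f := by
  rw [LinearMap.mem_ker, ← smul_eq_mul, map_smul] at h
  exact isSMulRegular_iff_right_eq_zero_of_smul.1 (inl_regular hs) _ h

lemma mem_ker_of_inr_mul {s : MvPolynomial τ k} (hs : IsSMulRegular N s)
    (f : MvPolynomial (σ ⊕ τ) k →ₗ[MvPolynomial (σ ⊕ τ) k] M ⊗[k] N) {y : MvPolynomial (σ ⊕ τ) k}
    (h : rename Sum.inr s * y ∈ LinearMap.ker f) : y ∈ LinearMap.ker f := by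
  rw [LinearMap.mem_ker, ← smul_eq_mul, map_smul] at h
  exact isSMulRegular_iff_right_eq_zero_of_smul.1 (inr_regular hs) _ h

end Kernel

/-- The minimal primes of `I R + J R` contract to minimal primes of `I`: a zero divisor modulo
`P R + J R` lying in `k[X]`, for a prime `P` of `k[X]`, belongs to `P`. -/
lemma comap_inl_mem_minimalPrimes {I : Ideal (MvPolynomial σ k)} {J : Ideal (MvPolynomial τ k)}
    {𝔭 : Ideal (MvPolynomial (σ ⊕ τ) k)}
    (h𝔭 : 𝔭 ∈ (I.map (rename Sum.inl : MvPolynomial σ k →ₐ[k] MvPolynomial (σ ⊕ τ) k) +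
        J.map (rename Sum.inr : MvPolynomial τ k →ₐ[k] MvPolynomial (σ ⊕ τ) k)).minimalPrimes) :
    𝔭.comap (rename Sum.inl : MvPolynomial σ k →ₐ[k] MvPolynomial (σ ⊕ τ) k) ∈
      I.minimalPrimes := by
  have := h𝔭.1.1
  obtain ⟨P, hP, hle⟩ := Ideal.exists_minimalPrimes_le
    (Ideal.map_le_iff_le_comap.1 (le_sup_left.trans h𝔭.1.2))
  have h := minimalPrimes_mono (sup_le_sup_right (Ideal.map_mono hP.1.2) _)
    (sup_le (Ideal.map_le_iff_le_comap.2 hle) (le_sup_right.trans h𝔭.1.2)) h𝔭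
  convert hP
  refine le_antisymm (fun s hs => ?_) hle
  by_contra hsP
  obtain ⟨y, hy, hsy⟩ := Ideal.exists_mul_mem_of_mem_minimalPrimes h hs
  obtain ⟨f, hf⟩ := exists_ker_eq_sum P J
  refine hy (hf.le ?_)
  exact mem_ker_of_inl_mul (quotient_isSMulRegular hP.1.1 hsP) f (hf.ge hsy)

lemma comap_inr_mem_minimalPrimes {I : Ideal (MvPolynomial σ k)} {J : Ideal (MvPolynomial τ k)}
    {𝔭 : Ideal (MvPolynomial (σ ⊕ τ) k)}
    (h𝔭 : 𝔭 ∈ (I.map (rename Sum.inl : MvPolynomial σ k →ₐ[k] MvPolynomial (σ ⊕ τ) k) +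
        J.map (rename Sum.inr : MvPolynomial τ k →ₐ[k] MvPolynomial (σ ⊕ τ) k)).minimalPrimes) :
    𝔭.comap (rename Sum.inr : MvPolynomial τ k →ₐ[k] MvPolynomial (σ ⊕ τ) k) ∈
      J.minimalPrimes := by
  have := h𝔭.1.1
  obtain ⟨P, hP, hle⟩ := Ideal.exists_minimalPrimes_le
    (Ideal.map_le_iff_le_comap.1 (le_sup_right.trans h𝔭.1.2))
  have h := minimalPrimes_mono (sup_le_sup_left (Ideal.map_mono hP.1.2) _)
    (sup_le (le_sup_left.trans h𝔭.1.2) (Ideal.map_le_iff_le_comap.2 hle)) h𝔭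
  convert hP
  refine le_antisymm (fun s hs => ?_) hle
  by_contra hsP
  obtain ⟨y, hy, hsy⟩ := Ideal.exists_mul_mem_of_mem_minimalPrimes h hs
  obtain ⟨f, hf⟩ := exists_ker_eq_sum I P
  refine hy (hf.le ?_)
  exact mem_ker_of_inr_mul (quotient_isSMulRegular hP.1.1 hsP) f (hf.ge hsy)

/-- The sum filtration of the symbolic powers contains the ordinary powers of `I R + J R`. -/
lemma pow_le_sumFil (I : Ideal (MvPolynomial σ k)) (J : Ideal (MvPolynomial τ k)) (n : ℕ) :
    (I.map (rename Sum.inl : MvPolynomial σ k →ₐ[k] MvPolynomial (σ ⊕ τ) k) +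
      J.map (rename Sum.inr : MvPolynomial τ k →ₐ[k] MvPolynomial (σ ⊕ τ) k)) ^ n ≤
      sumFil (symbPow I) (symbPow J) n := by
  induction n with
  | zero =>
    rw [pow_zero, Ideal.one_eq_top, top_le_iff, Ideal.eq_top_iff_one]
    have := mul_mem_sumFil (symbPow I) (symbPow J) (add_zero 0)
      (a := 1) (b := 1) (by simp [symbPow_zero]) (by simp [symbPow_zero])
    simpa using this
  | succ n ih =>
    rw [pow_succ']
    refine (Ideal.mul_mono_right ih).trans ?_
    rw [Submodule.add_eq_sup, Ideal.sup_mul]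
    refine sup_le ?_ ?_
    · rw [Ideal.mul_le]
      intro r hr s hs
      suffices H : I.map (rename Sum.inl : MvPolynomial σ k →ₐ[k] MvPolynomial (σ ⊕ τ) k) ≤
          Submodule.comap (LinearMap.mulRight (MvPolynomial (σ ⊕ τ) k) s)
            (sumFil (symbPow I) (symbPow J) (n + 1)) from H hr
      refine Ideal.map_le_iff_le_comap.2 fun a ha => ?_
      change rename Sum.inl a * s ∈ sumFil (symbPow I) (symbPow J) (n + 1)
      suffices H : sumFil (symbPow I) (symbPow J) n ≤
          Submodule.comap
            (LinearMap.mulLeft (MvPolynomial (σ ⊕ τ) k) (rename Sum.inl a))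
            (sumFil (symbPow I) (symbPow J) (n + 1)) from H hs
      refine sumFil_le _ _ fun i j hij f hf g hg => ?_
      change rename Sum.inl a * (rename Sum.inl f * rename Sum.inr g) ∈
        sumFil (symbPow I) (symbPow J) (n + 1)
      rw [← mul_assoc, ← map_mul]
      exact mul_mem_sumFil _ _ (by omega) (mul_mem_symbPow_succ ha hf) hg
    · rw [Ideal.mul_le]
      intro r hr s hs
      suffices H : J.map (rename Sum.inr : MvPolynomial τ k →ₐ[k] MvPolynomial (σ ⊕ τ) k) ≤
          Submodule.comap (LinearMap.mulRight (MvPolynomial (σ ⊕ τ) k) s)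
            (sumFil (symbPow I) (symbPow J) (n + 1)) from H hr
      refine Ideal.map_le_iff_le_comap.2 fun a ha => ?_
      change rename Sum.inr a * s ∈ sumFil (symbPow I) (symbPow J) (n + 1)
      suffices H : sumFil (symbPow I) (symbPow J) n ≤
          Submodule.comap
            (LinearMap.mulLeft (MvPolynomial (σ ⊕ τ) k) (rename Sum.inr a))
            (sumFil (symbPow I) (symbPow J) (n + 1)) from H hs
      refine sumFil_le _ _ fun i j hij f hf g hg => ?_
      change rename Sum.inr a * (rename Sum.inl f * rename Sum.inr g) ∈
        sumFil (symbPow I) (symbPow J) (n + 1)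
      rw [mul_left_comm, ← map_mul]
      exact mul_mem_sumFil _ _ (by omega) hf (mul_mem_symbPow_succ ha hg)

lemma sumFil_le_symbPow (I : Ideal (MvPolynomial σ k)) (J : Ideal (MvPolynomial τ k)) (n : ℕ) :
    sumFil (symbPow I) (symbPow J) n ≤
      symbPow (I.map (rename Sum.inl : MvPolynomial σ k →ₐ[k] MvPolynomial (σ ⊕ τ) k) +
        J.map (rename Sum.inr : MvPolynomial τ k →ₐ[k] MvPolynomial (σ ⊕ τ) k)) n := by
  refine sumFil_le _ _ fun i j hij a ha b hb => mem_symbPow.2 fun 𝔭 h𝔭 => ?_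
  obtain ⟨s, hs, hsa⟩ := mem_symbPow.1 ha _ (comap_inl_mem_minimalPrimes h𝔭)
  obtain ⟨t, ht, htb⟩ := mem_symbPow.1 hb _ (comap_inr_mem_minimalPrimes h𝔭)
  refine ⟨rename Sum.inl s * rename Sum.inr t,
    fun h => (h𝔭.1.1.mem_or_mem h).elim hs ht, ?_⟩
  rw [mul_mul_mul_comm, ← map_mul, ← map_mul, ← hij, pow_add]
  refine Ideal.mul_mem_mul (Ideal.pow_right_mono le_sup_left i ?_)
    (Ideal.pow_right_mono le_sup_right j ?_)
  · rw [← Ideal.map_pow]; exact Ideal.mem_map_of_mem _ hsa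
  · rw [← Ideal.map_pow]; exact Ideal.mem_map_of_mem _ htb

/-- The binomial expansion of symbolic powers: `(I + J)^(n) = ∑_{i + j = n} I^(i) J^(j)`. For `⊇`,
an element of `(I + J)^(n+1)` lies in `∑_{i + j = n} I^(i) J^(j)` by induction, and its class in
`⨁ (I^(i) / I^(i+1)) ⊗ (J^(j) / J^(j+1))` vanishes locally at the minimal primes of `I + J`,
hence vanishes. -/
theorem sumFil_symbPow [Finite σ] [Finite τ] (I : Ideal (MvPolynomial σ k))
    (J : Ideal (MvPolynomial τ k)) (n : ℕ) :
    sumFil (symbPow I) (symbPow J) n =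
      symbPow (I.map (rename Sum.inl : MvPolynomial σ k →ₐ[k] MvPolynomial (σ ⊕ τ) k) +
        J.map (rename Sum.inr : MvPolynomial τ k →ₐ[k] MvPolynomial (σ ⊕ τ) k)) n := by
  refine le_antisymm (sumFil_le_symbPow I J n) ?_
  induction n with
  | zero =>
    have := pow_le_sumFil I J 0
    rw [pow_zero, Ideal.one_eq_top, top_le_iff] at this
    rw [this]
    exact le_top
  | succ n ih =>
    intro f hf
    obtain ⟨t, rfl⟩ := ih (symbPow_antitone _ n.le_succ hf)
    rw [← grMap_eq_zero_iff (symbPow_antitone I) (symbPow_antitone J)]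
    funext p
    -- `r f ∈ (I R + J R)^(n+1)` for some `r` outside of `𝔭`, so that `r` kills the class of `f`
    refine eq_zero_of_locally_eq_zero (I := I) (J := J) (fun a ha x => smul_grPiece_eq_zero ha x)
      (fun b hb y => smul_grPiece_eq_zero hb y) (fun a ha => grPiece_regular ha)
      (fun b hb => grPiece_regular hb) fun 𝔭 h𝔭 => ?_
    obtain ⟨r, hr, h⟩ := mem_symbPow.1 hf 𝔭 h𝔭
    refine ⟨r, hr, ?_⟩
    have h' := pow_le_sumFil I J _ h
    rw [← smul_eq_mul, ← map_smul,
      ← grMap_eq_zero_iff (symbPow_antitone I) (symbPow_antitone J), map_smul] at h'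
    exact congrFun h' p

end GradedPieces

/-! ### Nonvanishing modulo the maximal homogeneous ideal -/

section Nonvanishing

variable {k : Type} [Field k] {σ : Type}

lemma mem_maxHomIdeal_iff {f : MvPolynomial σ k} : f ∈ maxHomIdeal k σ ↔ constantCoeff f = 0 := by
  rw [maxHomIdeal, ← Set.image_univ, mem_ideal_span_X_image, constantCoeff_eq]
  constructor
  · intro h
    by_contra hf
    obtain ⟨i, -, hi⟩ := h 0 (mem_support_iff.2 hf)
    exact hi rfl
  · intro h m hm
    have hm0 : m ≠ 0 := fun h0 => mem_support_iff.1 hm (h0 ▸ h)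
    obtain ⟨i, hi⟩ := Finsupp.ne_iff.1 hm0
    exact ⟨i, trivial, hi⟩

lemma maxHomIdeal_isPrime : (maxHomIdeal k σ).IsPrime := by
  have : maxHomIdeal k σ = RingHom.ker (constantCoeff : MvPolynomial σ k →+* k) :=
    Ideal.ext fun f => mem_maxHomIdeal_iff
  rw [this]
  exact RingHom.ker_isPrime _

lemma IsHomogeneousIdeal.le_maxHomIdeal {I : Ideal (MvPolynomial σ k)} (h : IsHomogeneousIdeal I)
    (hI : I ≠ ⊤) : I ≤ maxHomIdeal k σ := by
  intro f hf
  rw [mem_maxHomIdeal_iff, constantCoeff_eq]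
  by_contra h0
  have hc := h f hf 0
  rw [homogeneousComponent_zero] at hc
  exact hI (Ideal.eq_top_of_isUnit_mem _ hc ((isUnit_iff_ne_zero.2 h0).map C))

/-- By Nakayama's lemma, if `I^(i) / I^(i+1)` equals `m` times itself then it is killed by some
`r ∉ m`, so `I^i` and `I^(i+1)` agree locally at a minimal prime of `I` contained in `m`; a second
application of Nakayama's lemma gives `I = 0`. -/
lemma smul_grPiece_ne_top [Finite σ] {I : Ideal (MvPolynomial σ k)} (hbot : I ≠ ⊥)
    (hle : I ≤ maxHomIdeal k σ) (i : ℕ) [Module.Finite (MvPolynomial σ k) (grPiece (symbPow I) i)] :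
    maxHomIdeal k σ • (⊤ : Submodule (MvPolynomial σ k) (grPiece (symbPow I) i)) ≠ ⊤ := by
  intro htop
  have hprime := maxHomIdeal_isPrime (k := k) (σ := σ)
  obtain ⟨r, hr, hk⟩ := Submodule.exists_sub_one_mem_and_smul_eq_zero_of_fg_of_le_smul
    (maxHomIdeal k σ) (⊤ : Submodule (MvPolynomial σ k) (grPiece (symbPow I) i))
    Module.Finite.fg_top htop.ge
  obtain ⟨P, hP, hPm⟩ := Ideal.exists_minimalPrimes_le hle
  have hPp : P.IsPrime := hP.1.1
  have hrP : r ∉ P := fun h => hprime.ne_top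
    ((Ideal.eq_top_iff_one _).2 (by simpa using sub_mem (hPm h) hr))
  let φ := algebraMap (MvPolynomial σ k) (Localization.AtPrime P)
  have hloc : Ideal.map φ (I ^ i) ≤ Ideal.map φ I • Ideal.map φ (I ^ i) := by
    rw [smul_eq_mul, ← Ideal.map_mul, ← pow_succ']
    refine Ideal.map_le_iff_le_comap.2 fun f hf => ?_
    have h : r * f ∈ symbPow I (i + 1) := by
      have := hk (grMk _ i ⟨f, pow_le_symbPow I i hf⟩) trivial
      rwa [← map_smul, grMk_eq_zero] at this
    obtain ⟨s, hs, hsf⟩ := mem_symbPow.1 h P hP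
    refine (IsLocalization.algebraMap_mem_map_algebraMap_iff P.primeCompl _ _ _).2
      ⟨s * r, fun hsr => (hPp.mem_or_mem hsr).elim hs hrP, ?_⟩
    rwa [mul_assoc]
  have hzero : Ideal.map φ (I ^ i) = ⊥ := by
    refine Submodule.eq_bot_of_le_smul_of_le_jacobson_bot _ _
      (Ideal.FG.map (IsNoetherian.noetherian (I ^ i)) φ) hloc ?_
    rw [IsLocalRing.jacobson_eq_maximalIdeal _ bot_ne_top,
      ← Localization.AtPrime.map_eq_maximalIdeal]
    exact Ideal.map_mono hP.1.2
  have hinj : Function.Injective φ :=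
    IsLocalization.injective _ P.primeCompl_le_nonZeroDivisors
  have hpow : I ^ i = ⊥ := (Ideal.map_eq_bot_iff_of_injective hinj).1 hzero
  exact hbot (eq_zero_of_pow_eq_zero hpow)

end Nonvanishing

/-! ### The depth formula -/

section Conclusion

variable {k : Type} [Field k] {σ τ : Type}

instance grPiece_finite [Finite σ] (F : ℕ → Ideal (MvPolynomial σ k)) (i : ℕ) :
    Module.Finite (MvPolynomial σ k) (grPiece F i) :=
  Module.Finite.of_surjective (grMk F i) (grMk_surjective F i)

/-- The minimum of the depths of the summands `(F i / F (i + 1)) ⊗ (G j / G (j + 1))` is the depth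
of the graded piece of the sum filtration. -/
lemma idealDepth_grPiece_sumFil [Finite σ] [Finite τ] {F : ℕ → Ideal (MvPolynomial σ k)}
    {G : ℕ → Ideal (MvPolynomial τ k)} (hF : Antitone F) (hG : Antitone G) {d e : ℕ → ℕ}
    (hd : ∀ i, HasDepth (maxHomIdeal k σ) (d i) (grPiece F i))
    (he : ∀ j, HasDepth (maxHomIdeal k τ) (e j) (grPiece G j)) (n : ℕ) :
    idealDepth (maxHomIdeal k (σ ⊕ τ)) (grPiece (sumFil F G) n) =
      sInf {c | ∃ i j, i + j = n ∧ c = d i + e j} := by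
  obtain ⟨φ⟩ := nonempty_sumFil_equiv hF hG n
  have hfin : ∀ p : ↥(Finset.HasAntidiagonal.antidiagonal n), Module.Finite
      (MvPolynomial (σ ⊕ τ) k) (grPiece F p.1.1 ⊗[k] grPiece G p.1.2) := fun p =>
    Module.Finite.of_surjective (LinearMap.proj p ∘ₗ φ.toLinearMap)
      ((Function.surjective_eval p).comp φ.surjective)
  have hne : {c | ∃ i j, i + j = n ∧ c = d i + e j}.Nonempty := ⟨_, 0, n, zero_add n, rfl⟩
  have h : HasDepth (maxHomIdeal k (σ ⊕ τ)) (sInf {c | ∃ i j, i + j = n ∧ c = d i + e j})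
      (∀ p : ↥(Finset.HasAntidiagonal.antidiagonal n), grPiece F p.1.1 ⊗[k] grPiece G p.1.2) := by
    refine HasDepth.pi (fun p => (hd p.1.1).tensor (he p.1.2)) ?_ ?_
    · obtain ⟨i, j, hij, h⟩ := Nat.sInf_mem hne
      exact ⟨⟨(i, j), Finset.HasAntidiagonal.mem_antidiagonal.2 hij⟩, h.symm⟩
    · exact fun p => Nat.sInf_le ⟨_, _, Finset.HasAntidiagonal.mem_antidiagonal.1 p.2, rfl⟩
  exact (h.congr φ.symm).idealDepth_eq

end Conclusion

/-- **Theorem 4.6(i)**: for nonzero proper homogeneous ideals `I ⊆ A = k[X]`, `J ⊆ B = k[Y]`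
and `R = k[X,Y]`, for all `n ≥ 1`,
`depth (I+J)^{(n)}/(I+J)^{(n+1)} = min_{i+j=n} { depth I^{(i)}/I^{(i+1)} + depth J^{(j)}/J^{(j+1)} }`. -/
theorem depth_symbPow_sum_quotient_eq
    {k : Type} [Field k] {σ τ : Type} [Fintype σ] [Fintype τ]
    (I : Ideal (MvPolynomial σ k)) (J : Ideal (MvPolynomial τ k))
    (hIbot : I ≠ ⊥) (hItop : I ≠ ⊤) (hIhom : IsHomogeneousIdeal I)
    (hJbot : J ≠ ⊥) (hJtop : J ≠ ⊤) (hJhom : IsHomogeneousIdeal J)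
    (IR JR : Ideal (MvPolynomial (σ ⊕ τ) k))
    (hIR : IR = Ideal.map (rename Sum.inl : MvPolynomial σ k →ₐ[k] MvPolynomial (σ ⊕ τ) k) I)
    (hJR : JR = Ideal.map (rename Sum.inr : MvPolynomial τ k →ₐ[k] MvPolynomial (σ ⊕ τ) k) J)
    (n : ℕ) (hn : 1 ≤ n) :
    idealDepth (maxHomIdeal k (σ ⊕ τ))
      (↥(symbPow (IR + JR) n) ⧸
        Submodule.comap (symbPow (IR + JR) n).subtype (symbPow (IR + JR) (n + 1))) =
    sInf {d | ∃ i j, i + j = n ∧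
        d = idealDepth (maxHomIdeal k σ)
              (↥(symbPow I i) ⧸ Submodule.comap (symbPow I i).subtype (symbPow I (i + 1))) +
            idealDepth (maxHomIdeal k τ)
              (↥(symbPow J j) ⧸ Submodule.comap (symbPow J j).subtype (symbPow J (j + 1)))} := by
  subst hIR hJR
  choose d hd using fun i => exists_hasDepth (m := maxHomIdeal k σ) (grPiece (symbPow I) i)
    (smul_grPiece_ne_top hIbot (hIhom.le_maxHomIdeal hItop) i)
  choose e he using fun j => exists_hasDepth (m := maxHomIdeal k τ) (grPiece (symbPow J) j)
    (smul_grPiece_ne_top hJbot (hJhom.le_maxHomIdeal hJtop) j)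
  have h := idealDepth_grPiece_sumFil (symbPow_antitone I) (symbPow_antitone J) hd he n
  rw [funext (sumFil_symbPow I J)] at h
  have hd' : ∀ i, d i = idealDepth (maxHomIdeal k σ)
      (↥(symbPow I i) ⧸ Submodule.comap (symbPow I i).subtype (symbPow I (i + 1))) :=
    fun i => (hd i).idealDepth_eq.symm
  have he' : ∀ j, e j = idealDepth (maxHomIdeal k τ)
      (↥(symbPow J j) ⧸ Submodule.comap (symbPow J j).subtype (symbPow J (j + 1))) :=
    fun j => (he j).idealDepth_eq.symm
  simp only [hd', he'] at h
  exact h
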